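/- Let G be a finite group with a normal subgroup H such that G/H is supersoluble. Suppose that every maximal subgroup of every non-cyclic Sylow subgroup of the generalized Fitting subgroup F*(H) that has no supersoluble supplement in G is 𝔘ₛ-quasinormal in G. Then G is supersoluble. -/

import Mathlib

open scoped Pointwise

universe u

/-- `M` is a maximal subgroup of `K` (within the subgroup lattice of the ambient group). -/
def IsMaximalIn {G : Type*} [Group G] (M K : Subgroup G) : Prop :=
  M < K ∧ ∀ L : Subgroup G, M < L → L ≤ K → L = K

/-- `P` is a Sylow `p`-subgroup of the subgroup `E`. -/
def IsSylowIn {G : Type*} [Group G] (p : ℕ) (P E : Subgroup G) : Prop :=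
  P ≤ E ∧ IsPGroup p P ∧ ¬ p ∣ (P.subgroupOf E).index

/-- `H` is s-permutable in `G`: it permutes with every Sylow subgroup of `G`. -/
def SPermutable {G : Type*} [Group G] (H : Subgroup G) : Prop :=
  ∀ q : ℕ, q.Prime → ∀ Q : Subgroup G, IsSylowIn q Q ⊤ →
    (H : Set G) * (Q : Set G) = (Q : Set G) * (H : Set G)

/-- `A/B` is a chief factor of the ambient group. -/
def IsChiefFactor {G : Type*} [Group G] (A B : Subgroup G) : Prop :=
  A.Normal ∧ B.Normal ∧ B < A ∧ ∀ L : Subgroup G, L.Normal → B < L → L < A → False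

/-- The 𝔘-hypercenter: the product of all normal subgroups `N` such that every chief
factor `A/B` with `A ≤ N` has prime order. -/
def UHypercenter (G : Type*) [Group G] : Subgroup G :=
  sSup {N : Subgroup G | N.Normal ∧
    ∀ A B : Subgroup G, IsChiefFactor A B → A ≤ N → (B.relIndex A).Prime}

/-- The 𝔖-hypercenter: the product of all normal subgroups `N` such that every chief
factor `A/B` with `A ≤ N` is abelian with `G/C_G(A/B)` soluble. -/
def SHypercenter (G : Type*) [Group G] : Subgroup G :=
  sSup {N : Subgroup G | N.Normal ∧
    ∀ A B : Subgroup G, IsChiefFactor A B → A ≤ N →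
      (∀ a ∈ A, ∀ b ∈ A, a * b * a⁻¹ * b⁻¹ ∈ B) ∧
      ∃ C : Subgroup G, ∃ _ : C.Normal,
        (∀ g : G, g ∈ C ↔ ∀ h ∈ A, g * h * g⁻¹ * h⁻¹ ∈ B) ∧ IsSolvable (G ⧸ C)}

/-- `H` is 𝔘ₛ-quasinormal in `G`. -/
def UsQuasinormal {G : Type*} [Group G] (H : Subgroup G) : Prop :=
  ∃ T : Subgroup G, T.Normal ∧ SPermutable (H ⊔ T) ∧
    ∀ x ∈ H ⊓ T,
      (QuotientGroup.mk x : G ⧸ H.normalCore) ∈ UHypercenter (G ⧸ H.normalCore)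

/-- `H` is 𝔖ₛ-quasinormal in `G`. -/
def SsQuasinormal {G : Type*} [Group G] (H : Subgroup G) : Prop :=
  ∃ T : Subgroup G, T.Normal ∧ SPermutable (H ⊔ T) ∧
    ∀ x ∈ H ⊓ T,
      (QuotientGroup.mk x : G ⧸ H.normalCore) ∈ SHypercenter (G ⧸ H.normalCore)

/-- A group is supersoluble if it has a chain of subgroups, each normal in the whole
group, reaching from `⊥` to `⊤`, with all successive factors cyclic. -/
def IsSupersoluble (G : Type*) [Group G] : Prop :=
  ∃ (k : ℕ) (c : Fin (k + 1) → Subgroup G),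
    c 0 = ⊥ ∧ c (Fin.last k) = ⊤ ∧ (∀ i, (c i).Normal) ∧
    (∀ i : Fin k, c i.castSucc ≤ c i.succ) ∧
    ∀ i : Fin k, ∃ g ∈ c i.succ, ∀ x ∈ c i.succ, ∃ m : ℤ, x⁻¹ * g ^ m ∈ c i.castSucc

/-- `A` is subnormal in `G`. -/
def IsSubnormal {G : Type*} [Group G] (A : Subgroup G) : Prop :=
  ∃ (n : ℕ) (c : Fin (n + 1) → Subgroup G), c 0 = A ∧ c (Fin.last n) = ⊤ ∧
    ∀ i : Fin n, c i.castSucc ≤ c i.succ ∧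
      ∀ x ∈ c i.succ, ∀ a ∈ c i.castSucc, x * a * x⁻¹ ∈ c i.castSucc

/-- `H` has a supersoluble supplement in the ambient group. -/
def HasSupersolubleSupplement {G : Type*} [Group G] (H : Subgroup G) : Prop :=
  ∃ T : Subgroup G, IsSupersoluble T ∧ (H : Set G) * (T : Set G) = Set.univ

/-- A group is `p`-nilpotent if it has a normal subgroup of order prime to `p`
and of `p`-power index (a normal `p`-complement). -/
def IsPNilpotent (p : ℕ) (G : Type*) [Group G] : Prop :=
  ∃ N : Subgroup G, N.Normal ∧ Nat.Coprime (Nat.card N) p ∧ ∃ k : ℕ, N.index = p ^ k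

/-- `H` has a `p`-nilpotent supplement in the ambient group. -/
def HasPNilpotentSupplement {G : Type*} [Group G] (p : ℕ) (H : Subgroup G) : Prop :=
  ∃ T : Subgroup G, IsPNilpotent p T ∧ (H : Set G) * (T : Set G) = Set.univ

/-- `H` is an `n`-maximal subgroup of `P`: there is a chain
`H = Hₙ < ⋯ < H₁ < H₀ = P` with each term maximal in the preceding one. -/
def IsNMaximalIn {G : Type*} [Group G] (n : ℕ) (H P : Subgroup G) : Prop :=
  ∃ c : Fin (n + 1) → Subgroup G, c 0 = P ∧ c (Fin.last n) = H ∧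
    ∀ i : Fin n, IsMaximalIn (c i.succ) (c i.castSucc)

/-- A group is quasinilpotent if every element induces an inner automorphism
on every chief factor. -/
def IsQuasinilpotentGroup (G : Type*) [Group G] : Prop :=
  ∀ A B : Subgroup G, IsChiefFactor A B →
    ∀ x : G, ∃ y ∈ A, ∀ h ∈ A, (x * h * x⁻¹) * (y * h * y⁻¹)⁻¹ ∈ B

/-- The generalized Fitting subgroup: the product of all normal quasinilpotent
subgroups. -/
def generalizedFitting (G : Type*) [Group G] : Subgroup G :=
  sSup {N : Subgroup G | N.Normal ∧ IsQuasinilpotentGroup N}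

/-- The generalized Fitting subgroup of a subgroup `H`, as a subgroup of `G`. -/
def FStarIn {G : Type*} [Group G] (H : Subgroup G) : Subgroup G :=
  (generalizedFitting H).map H.subtype

/-- The Fitting subgroup: the product of all nilpotent normal subgroups. -/
def fittingSubgroup (G : Type*) [Group G] : Subgroup G :=
  sSup {N : Subgroup G | N.Normal ∧ Group.IsNilpotent N}

/-- The Fitting subgroup of a subgroup `H`, as a subgroup of `G`. -/
def FittingIn {G : Type*} [Group G] (H : Subgroup G) : Subgroup G :=
  (fittingSubgroup H).map H.subtype

/-! Write `F = F*(H)`; it is quasinilpotent and contains its centralizer in `H`.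

*`F` is soluble, hence nilpotent.* Otherwise `F` has a nonabelian simple quotient `X`. Let `P` be a
Sylow `p`-subgroup of `F` for the smallest prime `p` dividing `|X|`, and let `r ≠ p` be the largest.
The image of `P` in `X` is not cyclic, and a maximal subgroup `M` of `P` with proper image there
cannot be `𝔘ₛ`-quasinormal: the image of the normal subgroup `T` of the definition is trivial or
`X`, and in either case the image of `P` would have order dividing `p`. So every maximal subgroup of
the image of `P` has a supersoluble supplement in `X`. The supplements normalize Sylow
`r`-subgroups, so all these maximal subgroups act transitively on the Sylow `r`-subgroups of `X`.
For an action of a nontrivial `p`-group this leaves one Sylow `r`-subgroup only, which is impossible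
in `X`.

*The factors between `Φ(P)` and `P` have prime order*, for a Sylow subgroup `P` of `F`. If not,
there is a chief factor `A/B` of nonprime order which is the unique minimal normal subgroup of
`G/B` inside `P/B`. Consider a maximal subgroup `M` of `P` containing `B` but not `A`. A
supersoluble supplement of `M` would force `|A/B| = p`, so `M` is `𝔘ₛ`-quasinormal, and
this makes the Sylow `q`-subgroups of `G`, `q ≠ p`, normalize `M`, and hence all intersections of
such `M`. Applied to the span of a point of `A/B` fixed by a Sylow `p`-subgroup, this forces
`|A/B| = p`.

*Conclusion.* `⁅G, G⁆` centralizes the chief factors of `G` between `Φ(P)` and `P`, so by coprime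
action its `p'`-elements centralize `P`. Hence for each prime `q` the elements of `⁅G, H⁆`
centralizing the `q'`-elements of `F` form a nilpotent normal subgroup containing every `q`-element
of `⁅G, H⁆`. So `⁅G, H⁆ ≤ F`, that is, `H/F` is central in `G/F`. On a chief factor `A/B` below `P`
commutators and `(p - 1)`-th powers act trivially, so `G` acts as an abelian group of exponent
dividing `p - 1` and `|A/B| = p`. Cyclic steps thus lead from `1` to `F`, from `F` to `H`, and from
`H` to `G`.
-/

section FactorCentralizer

open Subgroup
open scoped commutatorElement

variable {G : Type*} [Group G] {K L A B C : Subgroup G}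

lemma mem_sup_of_le_normalizer (h : A ≤ normalizer B) {x : G} :
    x ∈ A ⊔ B ↔ ∃ a ∈ A, ∃ b ∈ B, a * b = x := by
  rw [← SetLike.mem_coe, coe_mul_of_left_le_normalizer_right A B h, Set.mem_mul]
  simp only [SetLike.mem_coe]

lemma le_normalizer_inf (hA : K ≤ normalizer A) (hB : K ≤ normalizer B) :
    K ≤ normalizer (A ⊓ B : Subgroup G) :=
  (le_inf hA hB).trans inf_normalizer_le_normalizer_inf

lemma le_normalizer_sup (hA : K ≤ normalizer A) (hB : K ≤ normalizer B) :
    K ≤ normalizer (A ⊔ B : Subgroup G) :=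
  (le_inf hA hB).trans (normalizer_inf_normalizer_le_normalizer_sup A B)

lemma le_normalizer_sSup {S : Set (Subgroup G)} (h : ∀ A ∈ S, K ≤ normalizer A) :
    K ≤ normalizer (sSup S : Subgroup G) := by
  rw [sSup_eq_iSup']
  exact (le_iInf fun A : S => h A A.2).trans (iInf_normalizer_le_normalizer_iSup _)

lemma commutator_le_inf_of_le_normalizer (hA : B ≤ normalizer A) (hB : A ≤ normalizer B) :
    ⁅A, B⁆ ≤ A ⊓ B :=
  le_inf (le_normalizer_iff_commutator_le_left.1 hA) (le_normalizer_iff_commutator_le_right.1 hB)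

/-- The centralizer `C_G(A/B)` of the section `A/B`, cut down to the normalizer of `B` so that it
is a subgroup even when `B` is not normal in `G`. -/
def factorCentralizer (A B : Subgroup G) : Subgroup G where
  carrier := {c | c ∈ normalizer B ∧ ∀ a ∈ A, ⁅c, a⁆ ∈ B}
  one_mem' := ⟨one_mem _, fun a _ => by simp⟩
  mul_mem' := by
    rintro c d ⟨hc, hcA⟩ ⟨hd, hdA⟩
    refine ⟨mul_mem hc hd, fun a ha => ?_⟩
    have split : ⁅c * d, a⁆ = c * ⁅d, a⁆ * c⁻¹ * ⁅c, a⁆ := by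
      simp only [commutatorElement_def]
      group
    rw [split]
    exact mul_mem ((mem_normalizer_iff.1 hc _).1 (hdA a ha)) (hcA a ha)
  inv_mem' := by
    rintro c ⟨hc, hcA⟩
    refine ⟨inv_mem hc, fun a ha => (mem_normalizer_iff.1 hc _).2 ?_⟩
    have conj_eq : c * ⁅c⁻¹, a⁆ * c⁻¹ = ⁅c, a⁆⁻¹ := by simp only [commutatorElement_def]; group
    rw [conj_eq]
    exact inv_mem (hcA a ha)

lemma le_factorCentralizer_iff (hK : K ≤ normalizer B) :
    K ≤ factorCentralizer A B ↔ ⁅K, A⁆ ≤ B := by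
  rw [commutator_le]
  exact ⟨fun h k hk => (h hk).2, fun h k hk => ⟨hK hk, h k hk⟩⟩

lemma le_factorCentralizer_comm (hK : K ≤ normalizer B) (hA : A ≤ normalizer B) :
    K ≤ factorCentralizer A B ↔ A ≤ factorCentralizer K B := by
  rw [le_factorCentralizer_iff hK, le_factorCentralizer_iff hA, commutator_comm]

lemma le_factorCentralizer_sup (hA : A ≤ normalizer B) (hC : C ≤ normalizer B)
    (hKA : K ≤ factorCentralizer A B) (hKC : K ≤ factorCentralizer C B) :
    K ≤ factorCentralizer (A ⊔ C) B := by
  have hK : K ≤ normalizer B := fun k hk => (hKA hk).1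
  rw [le_factorCentralizer_comm hK (sup_le hA hC)]
  exact sup_le ((le_factorCentralizer_comm hK hA).1 hKA) ((le_factorCentralizer_comm hK hC).1 hKC)

lemma le_factorCentralizer_self (hK : K ≤ normalizer B) : K ≤ factorCentralizer B B :=
  (le_factorCentralizer_iff hK).2 (le_normalizer_iff_commutator_le_right.1 hK)

lemma le_normalizer_factorCentralizer (hA : K ≤ normalizer A) (hB : K ≤ normalizer B) :
    K ≤ normalizer (factorCentralizer A B) := by
  refine le_normalizer_iff.2 fun k hk c hc => ⟨?_, fun a ha => ?_⟩
  · exact mul_mem (mul_mem (hB hk) hc.1) (inv_mem (hB hk))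
  · have := (mem_normalizer_iff.1 (hB hk) _).1
      (hc.2 _ ((mem_normalizer_iff''.1 (hA hk) a).1 ha))
    convert this using 1
    simp only [commutatorElement_def]
    group

end FactorCentralizer

section ChiefFactorIn

open Subgroup
open scoped commutatorElement

variable {G : Type*} [Group G] {K N A B L X Y : Subgroup G}

/-- `A/B` is a chief factor of the subgroup `K`, with `A` and `B` regarded as subgroups of the
ambient group. -/
structure IsChiefFactorIn (K A B : Subgroup G) : Prop where
  le : A ≤ K
  lt : B < A
  le_normalizer_left : K ≤ normalizer A
  le_normalizer_right : K ≤ normalizer B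
  eq_or_eq : ∀ L : Subgroup G, K ≤ normalizer L → B ≤ L → L ≤ A → L = B ∨ L = A

lemma exists_map_subtype_eq (h : A ≤ K) : ∃ A' : Subgroup K, A'.map K.subtype = A :=
  ⟨A.subgroupOf K, map_subgroupOf_eq_of_le h⟩

lemma le_normalizer_map_subtype_iff {A : Subgroup K} :
    K ≤ normalizer (A.map K.subtype : Subgroup G) ↔ A.Normal := by
  rw [← normal_subgroupOf_iff_le_normalizer (map_subtype_le A), subgroupOf,
    comap_map_eq_self_of_injective K.subtype_injective]

lemma isChiefFactorIn_map_subtype_iff {A B : Subgroup K} :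
    IsChiefFactorIn K (A.map K.subtype) (B.map K.subtype) ↔ IsChiefFactor A B := by
  constructor
  · rintro ⟨-, hBA, hA, hB, hmax⟩
    refine ⟨le_normalizer_map_subtype_iff.1 hA, le_normalizer_map_subtype_iff.1 hB,
      (map_lt_map_iff_of_injective K.subtype_injective).1 hBA, fun L hL hBL hLA => ?_⟩
    have hBL' := (map_lt_map_iff_of_injective K.subtype_injective).2 hBL
    have hLA' := (map_lt_map_iff_of_injective K.subtype_injective).2 hLA
    exact (hmax _ (le_normalizer_map_subtype_iff.2 hL) hBL'.le hLA'.le).elim hBL'.ne' hLA'.ne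
  · rintro ⟨hA, hB, hBA, hmax⟩
    refine ⟨map_subtype_le A, (map_lt_map_iff_of_injective K.subtype_injective).2 hBA,
      le_normalizer_map_subtype_iff.2 hA, le_normalizer_map_subtype_iff.2 hB,
      fun L hKL hBL hLA => ?_⟩
    obtain ⟨L, rfl⟩ := exists_map_subtype_eq (hLA.trans (map_subtype_le A))
    rw [map_le_map_iff_of_injective K.subtype_injective] at hBL hLA
    rw [le_normalizer_map_subtype_iff] at hKL
    rcases hBL.eq_or_lt with rfl | hBL
    · exact .inl rfl
    · exact .inr (congrArg _ (hLA.eq_of_not_lt fun hLA => hmax L hKL hBL hLA))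

lemma smul_le_normalizer_smul_iff (g : G) :
    MulAut.conj g • K ≤ normalizer (MulAut.conj g • A : Subgroup G) ↔ K ≤ normalizer A := by
  have conj_le {D E : Subgroup G} (x : G) (h : D ≤ normalizer E) :
      MulAut.conj x • D ≤ normalizer (MulAut.conj x • E : Subgroup G) :=
    (pointwise_smul_le_pointwise_smul_iff.2 h).trans (le_normalizer_map _)
  refine ⟨fun h => ?_, conj_le g⟩
  simpa only [map_inv, inv_smul_smul] using conj_le g⁻¹ h

lemma smul_eq_self_of_le_normalizer (h : K ≤ normalizer A) {k : G} (hk : k ∈ K) :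
    MulAut.conj k • A = A :=
  (mem_normalizer_iff_map_conj_eq.1 (h hk))

lemma le_normalizer_iSup_smul (K A : Subgroup G) :
    K ≤ normalizer (⨆ k : K, MulAut.conj (k : G) • A : Subgroup G) := by
  refine le_normalizer_iff.2 fun k hk a ha => ?_
  have le_comap : (⨆ l : K, MulAut.conj (l : G) • A) ≤
      (⨆ l : K, MulAut.conj (l : G) • A).comap (MulAut.conj k).toMonoidHom := by
    refine iSup_le fun l x hx => ?_
    refine le_iSup (fun l : K => MulAut.conj (l : G) • A) (⟨k, hk⟩ * l) ?_
    have hkx := smul_mem_pointwise_smul x (MulAut.conj k) _ hx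
    rwa [smul_smul, ← map_mul] at hkx
  exact le_comap ha

lemma le_iSup_smul (K A : Subgroup G) : A ≤ ⨆ k : K, MulAut.conj (k : G) • A := by
  simpa only [coe_one, map_one, one_smul] using
    le_iSup (fun k : K => MulAut.conj (k : G) • A) 1

lemma iSup_smul_le (hA : K ≤ normalizer A) (hXA : X ≤ A) :
    ⨆ k : K, MulAut.conj (k : G) • X ≤ A :=
  iSup_le fun k => (pointwise_smul_le_pointwise_smul_iff.2 hXA).trans
    (smul_eq_self_of_le_normalizer hA k.2).le

namespace IsChiefFactorIn

lemma smul (h : IsChiefFactorIn K A B) (g : G) :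
    IsChiefFactorIn (MulAut.conj g • K) (MulAut.conj g • A) (MulAut.conj g • B) := by
  refine ⟨pointwise_smul_le_pointwise_smul_iff.2 h.le, ?_,
    (smul_le_normalizer_smul_iff g).2 h.le_normalizer_left,
    (smul_le_normalizer_smul_iff g).2 h.le_normalizer_right, fun L hKL hBL hLA => ?_⟩
  · simpa only [lt_iff_le_not_ge, pointwise_smul_le_pointwise_smul_iff] using h.lt
  · obtain ⟨L, rfl⟩ : ∃ L' : Subgroup G, MulAut.conj g • L' = L := ⟨_, smul_inv_smul _ L⟩
    rw [smul_le_normalizer_smul_iff] at hKL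
    rw [pointwise_smul_le_pointwise_smul_iff] at hBL hLA
    exact (h.eq_or_eq L hKL hBL hLA).imp (congrArg _) (congrArg _)

lemma smul_of_mem (h : IsChiefFactorIn N A B) (hN : K ≤ normalizer N) (hB : K ≤ normalizer B)
    {k : G} (hk : k ∈ K) : IsChiefFactorIn N (MulAut.conj k • A) B := by
  simpa only [smul_eq_self_of_le_normalizer hN hk, smul_eq_self_of_le_normalizer hB hk]
    using h.smul k

lemma sup_eq (h : IsChiefFactorIn K A B) (hL : K ≤ normalizer L) (hLA : L ≤ A) (hLB : ¬ L ≤ B) :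
    L ⊔ B = A :=
  (h.eq_or_eq _ (le_normalizer_sup hL h.le_normalizer_right) le_sup_right
    (sup_le hLA h.lt.le)).resolve_left fun eq => hLB (eq ▸ le_sup_left)

lemma inf_eq (h : IsChiefFactorIn K A B) (hL : K ≤ normalizer L) (hBL : B ≤ L) (hAL : ¬ A ≤ L) :
    A ⊓ L = B :=
  (h.eq_or_eq _ (le_normalizer_inf h.le_normalizer_left hL) (le_inf h.lt.le hBL)
    inf_le_left).resolve_right fun eq => hAL (eq ▸ inf_le_right)

lemma commutator_le_of_ne (hX : IsChiefFactorIn K X B) (hY : IsChiefFactorIn K Y B)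
    (hXY : X ≠ Y) : ⁅X, Y⁆ ≤ B := by
  have not_le : ¬ X ≤ Y := fun hle =>
    (hY.eq_or_eq X hX.le_normalizer_left hX.lt.le hle).elim hX.lt.ne' hXY
  rw [← hX.inf_eq hY.le_normalizer_left hY.lt.le not_le]
  exact commutator_le_inf_of_le_normalizer (hY.le.trans hX.le_normalizer_left)
    (hX.le.trans hY.le_normalizer_left)

end IsChiefFactorIn

lemma exists_isChiefFactorIn_le [Finite G] (hA : K ≤ normalizer A) (hB : K ≤ normalizer B)
    (hBA : B < A) (hAK : A ≤ K) : ∃ V ≤ A, IsChiefFactorIn K V B := by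
  obtain ⟨V, ⟨hKV, hBV, hVA⟩, hmin⟩ := (Set.toFinite
    {V : Subgroup G | K ≤ normalizer V ∧ B < V ∧ V ≤ A}).exists_minimal ⟨A, hA, hBA, le_rfl⟩
  refine ⟨V, hVA, hVA.trans hAK, hBV, hKV, hB, fun L hL hBL hLV =>
    or_iff_not_imp_left.2 fun hLB => ?_⟩
  exact hLV.antisymm (hmin ⟨hL, hBL.lt_of_ne' hLB, hLV.trans hVA⟩ hLV)

lemma isQuasinilpotentGroup_coe_iff : IsQuasinilpotentGroup K ↔
    ∀ A B : Subgroup G, IsChiefFactorIn K A B → K ≤ A ⊔ factorCentralizer A B := by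
  constructor
  · intro h A B hAB x hx
    obtain ⟨A, rfl⟩ := exists_map_subtype_eq hAB.le
    obtain ⟨B, rfl⟩ := exists_map_subtype_eq (hAB.lt.le.trans hAB.le)
    obtain ⟨y, hy, hyx⟩ := h A B (isChiefFactorIn_map_subtype_iff.1 hAB) ⟨x, hx⟩
    have hyxK : (y : G)⁻¹ * x ∈ K := mul_mem (inv_mem y.2) hx
    have centralizes : (y : G)⁻¹ * x ∈ factorCentralizer (A.map K.subtype) (B.map K.subtype) := by
      refine ⟨hAB.le_normalizer_right hyxK, ?_⟩
      rintro _ ⟨a, ha, rfl⟩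
      refine (mem_normalizer_iff.1 (hAB.le_normalizer_right y.2) _).2 ?_
      have conj_commutator (b : G) : (y : G) * ⁅(y : G)⁻¹ * x, b⁆ * (y : G)⁻¹ =
          x * b * x⁻¹ * (y * b * (y : G)⁻¹)⁻¹ := by
        simp only [commutatorElement_def]
        group
      rw [conj_commutator]
      exact mem_map_of_mem K.subtype (hyx a ha)
    simpa using mul_mem_sup (mem_map_of_mem K.subtype hy) centralizes
  · intro h A B hAB x
    have hAB' := isChiefFactorIn_map_subtype_iff.2 hAB
    obtain ⟨_, ⟨y, hy, rfl⟩, c, hc, hyc⟩ := (mem_sup_of_le_normalizer (hAB'.le.trans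
      (le_normalizer_factorCentralizer hAB'.le_normalizer_left hAB'.le_normalizer_right))).1
      (h _ _ hAB' x.2)
    refine ⟨y, hy, fun a ha => ?_⟩
    rw [← (mem_map_iff_mem K.subtype_injective (K := B))]
    have conj_mem := (mem_normalizer_iff.1 (hAB'.le_normalizer_right y.2) _).1
      (hc.2 a (mem_map_of_mem _ ha))
    have conj_commutator (b : G) : (y : G) * ⁅c, b⁆ * (y : G)⁻¹ =
        x * b * (x : G)⁻¹ * (y * b * (y : G)⁻¹)⁻¹ := by
      rw [← hyc]
      simp only [commutatorElement_def, coe_subtype]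
      group
    rwa [conj_commutator] at conj_mem

end ChiefFactorIn

section Quasinilpotent

open Subgroup

variable {G : Type*} [Group G] {K M N A B X Y W Z : Subgroup G}

lemma le_sup_factorCentralizer_sup (hWN : W ≤ N) (hXN : X ≤ N) (hW : N ≤ normalizer W)
    (hX : N ≤ normalizer X) (hB : N ≤ normalizer B) (hXW : X ≤ factorCentralizer W B)
    (hNW : N ≤ W ⊔ factorCentralizer W B) (hNX : N ≤ X ⊔ factorCentralizer X B) :
    N ≤ W ⊔ X ⊔ factorCentralizer (W ⊔ X) B := by
  intro n hn
  obtain ⟨w, hw, c, hc, rfl⟩ := (mem_sup_of_le_normalizer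
    (hWN.trans (le_normalizer_factorCentralizer hW hB))).1 (hNW hn)
  have hcN : c ∈ N := (mul_mem_cancel_left (hWN hw)).1 hn
  obtain ⟨x, hx, d, hdX, rfl⟩ := (mem_sup_of_le_normalizer
    (hXN.trans (le_normalizer_factorCentralizer hX hB))).1 (hNX hcN)
  have hdW : d ∈ factorCentralizer W B := (mul_mem_cancel_left (hXW hx)).1 hc
  have hd : zpowers d ≤ factorCentralizer (W ⊔ X) B :=
    le_factorCentralizer_sup (hWN.trans hB) (hXN.trans hB) (zpowers_le.2 hdW) (zpowers_le.2 hdX)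
  rw [← mul_assoc]
  exact mul_mem_sup (mul_mem_sup hw hx) (zpowers_le.1 hd)

lemma IsQuasinilpotentGroup.le_sSup_sup_factorCentralizer [Finite G]
    (hN : IsQuasinilpotentGroup N) (hBN : B ≤ N) (hB : N ≤ normalizer B) {S : Set (Subgroup G)}
    (hS : ∀ X ∈ S, IsChiefFactorIn N X B) :
    N ≤ B ⊔ sSup S ⊔ factorCentralizer (B ⊔ sSup S) B := by
  induction S, S.toFinite using Set.Finite.induction_on with
  | empty =>
    rw [sSup_empty, sup_bot_eq]
    exact (le_factorCentralizer_self hB).trans le_sup_right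
  | @insert X S _ _ ih =>
    have hX := hS X (Set.mem_insert X S)
    have hS' : ∀ Y ∈ S, IsChiefFactorIn N Y B := fun Y hY => hS Y (Set.mem_insert_of_mem X hY)
    set W := B ⊔ sSup S
    have hWN : W ≤ N := sup_le hBN (sSup_le fun Y hY => (hS' Y hY).le)
    have hW : N ≤ normalizer W :=
      le_normalizer_sup hB (le_normalizer_sSup fun Y hY => (hS' Y hY).le_normalizer_left)
    rw [sSup_insert, sup_comm X, ← sup_assoc]
    by_cases hXW : X ≤ W
    · rw [sup_eq_left.2 hXW]
      exact ih hS'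
    · have X_centralizes : X ≤ factorCentralizer W B := by
        rw [le_factorCentralizer_iff (hX.le.trans hB), ← hX.inf_eq hW le_sup_left hXW]
        exact commutator_le_inf_of_le_normalizer (hWN.trans hX.le_normalizer_left)
          (hX.le.trans hW)
      exact le_sup_factorCentralizer_sup hWN hX.le hW hX.le_normalizer_left hB X_centralizes
        (ih hS') (isQuasinilpotentGroup_coe_iff.1 hN X B hX)

-- The socle of `N ⊓ A` over `N ⊓ B` covers `A/B`, since `A/B` is chief in the larger group `K`.
lemma IsQuasinilpotentGroup.le_sup_factorCentralizer [Finite G] (hN : IsQuasinilpotentGroup N)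
    (hNK : N ≤ K) (hKN : K ≤ normalizer N) (hAB : IsChiefFactorIn K A B) :
    N ≤ A ⊔ factorCentralizer A B := by
  have hKA := hAB.le_normalizer_left
  have hKB := hAB.le_normalizer_right
  by_cases hANB : A ⊓ N ≤ B
  · have commutator_le : ⁅N, A⁆ ≤ B :=
      (commutator_le_inf_of_le_normalizer (hAB.le.trans hKN) (hNK.trans hKA)).trans
        (inf_comm N A ▸ hANB)
    exact ((le_factorCentralizer_iff (hNK.trans hKB)).2 commutator_le).trans le_sup_right
  have hKD : K ≤ normalizer (B ⊓ N : Subgroup G) := le_normalizer_inf hKB hKN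
  obtain ⟨V, hVA, hV⟩ := exists_isChiefFactorIn_le
    (hNK.trans (le_normalizer_inf hKA hKN)) (hNK.trans hKD)
    ((inf_le_inf_right N hAB.lt.le).lt_of_not_ge fun h => hANB (h.trans inf_le_left)) inf_le_right
  set U := ⨆ k : K, MulAut.conj (k : G) • V
  have hUA : U ≤ A := iSup_smul_le hKA (hVA.trans inf_le_left)
  have hUN : U ≤ N := iSup_smul_le hKN hV.le
  have hUB : ¬ U ≤ B := fun h => hV.lt.not_ge (le_inf ((le_iSup_smul K V).trans h) hV.le)
  have hA : U ⊔ B = A := hAB.sup_eq (le_normalizer_iSup_smul K V) hUA hUB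
  have hNU : N ≤ B ⊓ N ⊔ U ⊔ factorCentralizer (B ⊓ N ⊔ U) (B ⊓ N) := by
    refine hN.le_sSup_sup_factorCentralizer inf_le_right (hNK.trans hKD) ?_
    rintro _ ⟨k, rfl⟩
    exact hV.smul_of_mem hKN hKD k.2
  have centralizer_le : N ⊓ factorCentralizer (B ⊓ N ⊔ U) (B ⊓ N) ≤ factorCentralizer A B := by
    have hNB : N ⊓ factorCentralizer (B ⊓ N ⊔ U) (B ⊓ N) ≤ normalizer B :=
      inf_le_left.trans (hNK.trans hKB)
    rw [← hA]
    refine le_factorCentralizer_sup (hUN.trans (hNK.trans hKB)) le_normalizer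
      (fun c hc => ⟨hNB hc, fun u hu => (hc.2.2 u (le_sup_right (a := B ⊓ N) hu)).1⟩)
      (le_factorCentralizer_self hNB)
  intro n hn
  have hUD : B ⊓ N ⊔ U ≤ N := sup_le inf_le_right hUN
  obtain ⟨u, hu, c, hc, rfl⟩ := (mem_sup_of_le_normalizer (hUD.trans
    (le_normalizer_factorCentralizer (le_normalizer_sup (hNK.trans hKD)
      (hNK.trans (le_normalizer_iSup_smul K V))) (hNK.trans hKD)))).1 (hNU hn)
  exact mul_mem_sup (sup_le (inf_le_left.trans hAB.lt.le) hUA hu)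
    (centralizer_le ⟨(mul_mem_cancel_left (hUD hu)).1 hn, hc⟩)

lemma IsQuasinilpotentGroup.sup [Finite G] (hM : IsQuasinilpotentGroup M)
    (hN : IsQuasinilpotentGroup N) (hMN : M ≤ normalizer N) (hNM : N ≤ normalizer M) :
    IsQuasinilpotentGroup (M ⊔ N : Subgroup G) :=
  isQuasinilpotentGroup_coe_iff.2 fun _ _ hAB =>
    sup_le (hM.le_sup_factorCentralizer le_sup_left (sup_le le_normalizer hNM) hAB)
      (hN.le_sup_factorCentralizer le_sup_right (sup_le hMN le_normalizer) hAB)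

lemma le_factorCentralizer_of_sup_eq (hX : X ≤ normalizer B) (hY : Y ≤ normalizer B)
    (hA : Y ⊔ B = A) (hXY : ⁅X, Y⁆ ≤ B) : X ≤ factorCentralizer A B :=
  hA ▸ le_factorCentralizer_sup hY le_normalizer ((le_factorCentralizer_iff hX).2 hXY)
    (le_factorCentralizer_self hX)

lemma isQuasinilpotentGroup_of_le_sSup (hZ : Z ≤ centralizer N) {S : Set (Subgroup G)}
    (hS : ∀ X ∈ S, IsChiefFactorIn N X Z) (hNS : N ≤ sSup S) : IsQuasinilpotentGroup N := by
  refine isQuasinilpotentGroup_coe_iff.2 fun A B hAB => ?_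
  have hA := hAB.le_normalizer_left
  have hB := hAB.le_normalizer_right
  by_cases hNC : N ≤ factorCentralizer A B
  · exact hNC.trans le_sup_right
  obtain ⟨Y, hYS, hYC⟩ : ∃ Y ∈ S, ¬ Y ≤ factorCentralizer A B := by
    by_contra! h
    exact hNC (hNS.trans (sSup_le h))
  have hY := hS Y hYS
  have hZN : Z ≤ N := hY.lt.le.trans hY.le
  have hZC : Z ≤ factorCentralizer A B := (le_factorCentralizer_iff (hZN.trans hB)).2
    ((commutator_mono le_rfl hAB.le).trans
      ((commutator_eq_bot_iff_le_centralizer.2 hZ).le.trans bot_le))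
  have hYAB : ¬ Y ⊓ A ≤ B := fun h => hYC <| (le_factorCentralizer_iff (hY.le.trans hB)).2 <|
    (commutator_le_inf_of_le_normalizer (hAB.le.trans hY.le_normalizer_left)
      (hY.le.trans hA)).trans h
  have hYA : Y ⊓ A ⊔ B = A :=
    hAB.sup_eq (le_normalizer_inf hY.le_normalizer_left hA) inf_le_right hYAB
  have hZA : Z ⊓ A ≤ B := by
    by_contra h
    refine hNC (le_factorCentralizer_of_sup_eq hB ((inf_le_left.trans hZN).trans hB)
      (hAB.sup_eq (le_normalizer_inf hY.le_normalizer_right hA) inf_le_right h) ?_)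
    rw [commutator_comm]
    exact (commutator_mono inf_le_left le_rfl).trans
      ((commutator_eq_bot_iff_le_centralizer.2 hZ).le.trans bot_le)
  have hYZ : Y ⊓ A ⊔ Z = Y := hY.sup_eq (le_normalizer_inf hY.le_normalizer_left hA) inf_le_left
    fun h => hYAB ((le_inf h inf_le_right).trans hZA)
  refine hNS.trans (sSup_le fun X hXS => ?_)
  have hX := hS X hXS
  rcases eq_or_ne X Y with rfl | hXY
  · rw [← hYZ]
    exact sup_le_sup inf_le_right hZC
  · refine (le_factorCentralizer_of_sup_eq (hX.le.trans hB)
      ((inf_le_left.trans hY.le).trans hB) hYA ?_).trans le_sup_right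
    refine (le_inf ?_ ?_).trans hZA
    · exact (commutator_mono le_rfl inf_le_left).trans (hX.commutator_le_of_ne hY hXY)
    · exact (commutator_mono hX.le inf_le_right).trans (le_normalizer_iff_commutator_le_right.1 hA)

end Quasinilpotent

section GeneralizedFitting

open Subgroup

variable {G Γ Δ : Type*} [Group G] [Group Γ] [Group Δ]

lemma IsChiefFactor.comap {f : Γ →* Δ} (hf : Function.Surjective f) {A B : Subgroup Δ}
    (h : IsChiefFactor A B) : IsChiefFactor (A.comap f) (B.comap f) := by
  obtain ⟨hA, hB, hBA, hmax⟩ := h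
  refine ⟨hA.comap f, hB.comap f, (comap_lt_comap_of_surjective hf).2 hBA,
    fun L hL hBL hLA => ?_⟩
  have hker : f.ker ≤ L := (f.ker_le_comap B).trans hBL.le
  obtain ⟨L, rfl⟩ : ∃ L' : Subgroup Δ, L'.comap f = L := ⟨L.map f, comap_map_eq_self hker⟩
  rw [comap_lt_comap_of_surjective hf] at hBL hLA
  refine hmax L ?_ hBL hLA
  rw [← map_comap_eq_self_of_surjective hf L]
  exact hL.map f hf

lemma IsQuasinilpotentGroup.of_surjective (hΓ : IsQuasinilpotentGroup Γ) {f : Γ →* Δ}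
    (hf : Function.Surjective f) : IsQuasinilpotentGroup Δ := by
  intro A B hAB x
  obtain ⟨x, rfl⟩ := hf x
  obtain ⟨y, hy, hyx⟩ := hΓ _ _ (hAB.comap hf) x
  refine ⟨f y, hy, fun a ha => ?_⟩
  obtain ⟨a, rfl⟩ := hf a
  simpa only [mem_comap, map_mul, map_inv] using hyx a ha

lemma isQuasinilpotentGroup_generalizedFitting [Finite Γ] :
    IsQuasinilpotentGroup (generalizedFitting Γ) := by
  obtain ⟨N, ⟨hN, hNq⟩, hmax⟩ := (Set.toFinite
    {N : Subgroup Γ | N.Normal ∧ IsQuasinilpotentGroup N}).exists_maximal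
      ⟨⊥, inferInstance, fun A B hAB => (hAB.2.2.1.ne (Subsingleton.elim B A)).elim⟩
  have eq_sSup : generalizedFitting Γ = N := by
    refine le_antisymm (sSup_le fun M ⟨hM, hMq⟩ => ?_) (le_sSup ⟨hN, hNq⟩)
    exact le_sup_left.trans (hmax ⟨sup_normal M N, hMq.sup hNq le_normalizer_of_normal
      le_normalizer_of_normal⟩ le_sup_right)
  exact eq_sSup ▸ hNq

lemma characteristic_generalizedFitting : (generalizedFitting Γ).Characteristic := by
  refine characteristic_iff_map_le.2 fun φ => map_le_iff_le_comap.2 (sSup_le fun N hN => ?_)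
  refine map_le_iff_le_comap.1 (le_sSup ⟨hN.1.map _ φ.surjective, ?_⟩)
  exact hN.2.of_surjective (φ.toMonoidHom.subgroupMap_surjective N)

lemma centralizer_generalizedFitting_le [Finite Γ] :
    centralizer (generalizedFitting Γ : Set Γ) ≤ generalizedFitting Γ := by
  set F := generalizedFitting Γ
  have hF : F.Normal := have := characteristic_generalizedFitting (Γ := Γ); inferInstance
  by_contra hCF
  obtain ⟨N, ⟨hN, hNC, hNF⟩, hmin⟩ := (Set.toFinite {N : Subgroup Γ | N.Normal ∧
    N ≤ centralizer (F : Set Γ) ∧ ¬ N ≤ F}).exists_minimal ⟨_, inferInstance, le_rfl, hCF⟩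
  obtain ⟨V, hVN, hV⟩ := exists_isChiefFactorIn_le (le_normalizer_of_normal (H := N) (K := N))
    (le_normalizer_of_normal (H := N ⊓ F) (K := N))
    (inf_le_left.lt_of_not_ge fun h => hNF (h.trans inf_le_right)) le_rfl
  set U := ⨆ g : (⊤ : Subgroup Γ), MulAut.conj (g : Γ) • V
  have hU : U.Normal := normalizer_eq_top_iff.1 (top_le_iff.1 (le_normalizer_iSup_smul ⊤ V))
  have hUN : U ≤ N := iSup_smul_le le_normalizer_of_normal hVN
  have hUF : ¬ U ≤ F := fun h => hV.lt.not_ge (le_inf hVN ((le_iSup_smul ⊤ V).trans h))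
  have hNU : N ≤ U := hmin ⟨hU, hUN.trans hNC, hUF⟩ hUN
  have center_le : N ⊓ F ≤ centralizer (N : Set Γ) :=
    inf_le_right.trans (le_centralizer_iff.1 hNC)
  refine hNF (le_sSup ⟨hN, isQuasinilpotentGroup_of_le_sSup center_le ?_ hNU⟩)
  rintro _ ⟨g, rfl⟩
  exact hV.smul_of_mem le_normalizer_of_normal le_normalizer_of_normal g.2

lemma isChiefFactorIn_top_iff {A B : Subgroup Γ} :
    IsChiefFactorIn ⊤ A B ↔ IsChiefFactor A B := by
  constructor
  · rintro ⟨-, hBA, hA, hB, hmax⟩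
    simp only [top_le_iff, normalizer_eq_top_iff] at hA hB hmax
    exact ⟨hA, hB, hBA, fun L hL hBL hLA => (hmax L hL hBL.le hLA.le).elim hBL.ne' hLA.ne⟩
  · rintro ⟨hA, hB, hBA, hmax⟩
    refine ⟨le_top, hBA, le_normalizer_of_normal, le_normalizer_of_normal, fun L hL hBL hLA => ?_⟩
    by_contra! hne
    exact hmax L (normalizer_eq_top_iff.1 (top_le_iff.1 hL)) (hBL.lt_of_ne hne.1.symm)
      (hLA.lt_of_ne hne.2)

lemma isQuasinilpotentGroup_iff :
    IsQuasinilpotentGroup Γ ↔ ∀ A B : Subgroup Γ, IsChiefFactor A B →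
      A ⊔ factorCentralizer A B = ⊤ := by
  have htop : IsQuasinilpotentGroup (⊤ : Subgroup Γ) ↔ IsQuasinilpotentGroup Γ :=
    ⟨fun h => h.of_surjective (f := (topEquiv (G := Γ)).toMonoidHom) topEquiv.surjective,
      fun h => h.of_surjective (f := (topEquiv (G := Γ)).symm.toMonoidHom)
        topEquiv.symm.surjective⟩
  simp only [← htop, isQuasinilpotentGroup_coe_iff, isChiefFactorIn_top_iff, top_le_iff]

variable {H N : Subgroup G}

lemma FStarIn_le (H : Subgroup G) : FStarIn H ≤ H :=
  map_subtype_le _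

lemma FStarIn_normal [H.Normal] : (FStarIn H).Normal :=
  have := characteristic_generalizedFitting (Γ := H)
  ConjAct.normal_of_characteristic_of_normal

lemma isQuasinilpotentGroup_FStarIn [Finite G] : IsQuasinilpotentGroup (FStarIn H) :=
  isQuasinilpotentGroup_generalizedFitting.of_surjective (H.subtype.subgroupMap_surjective _)

lemma inf_centralizer_FStarIn_le [Finite G] : H ⊓ centralizer (FStarIn H : Set G) ≤ FStarIn H := by
  rintro x ⟨hxH, hx⟩
  refine ⟨⟨x, hxH⟩, centralizer_generalizedFitting_le (mem_centralizer_iff.2 fun f hf => ?_), rfl⟩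
  exact Subtype.ext (mem_centralizer_iff.1 hx f (mem_map_of_mem H.subtype hf))

lemma IsQuasinilpotentGroup.le_FStarIn (hN : IsQuasinilpotentGroup N) (hNH : N ≤ H)
    (hHN : H ≤ normalizer N) : N ≤ FStarIn H := by
  rw [← map_subgroupOf_eq_of_le hNH]
  refine map_mono (le_sSup ⟨(normal_subgroupOf_iff_le_normalizer hNH).2 hHN, ?_⟩)
  exact hN.of_surjective (f := (subgroupOfEquivOfLe hNH).symm.toMonoidHom)
    (subgroupOfEquivOfLe hNH).symm.surjective

end GeneralizedFitting

section Supersoluble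

open Subgroup

variable {G Γ : Type*} [Group G] [Group Γ] {A B K S Q Y : Subgroup G}

/-- One step of a supersolubility chain: `A/B` is cyclic, with `A` and `B` normal in the group. -/
structure IsCyclicStep (B A : Subgroup G) : Prop where
  normal_left : B.Normal
  normal_right : A.Normal
  le : B ≤ A
  exists_zpow : ∃ g ∈ A, ∀ x ∈ A, ∃ m : ℤ, x⁻¹ * g ^ m ∈ B

lemma isCyclic_map_iff (f : G →* Γ) :
    IsCyclic (A.map f) ↔ ∃ g ∈ A, ∀ x ∈ A, ∃ m : ℤ, x⁻¹ * g ^ m ∈ f.ker := by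
  have mem_ker_iff (g x : G) (m : ℤ) : x⁻¹ * g ^ m ∈ f.ker ↔ f g ^ m = f x := by
    rw [MonoidHom.mem_ker, map_mul, map_inv, inv_mul_eq_one, map_zpow, eq_comm]
  rw [isCyclic_iff_exists_zpowers_eq_top]
  simp only [eq_top_iff', mem_zpowers_iff, mem_ker_iff]
  constructor
  · rintro ⟨⟨_, g, hg, rfl⟩, h⟩
    refine ⟨g, hg, fun x hx => ?_⟩
    obtain ⟨m, hm⟩ := h ⟨f x, mem_map_of_mem f hx⟩
    exact ⟨m, congrArg Subtype.val hm⟩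
  · rintro ⟨g, hg, h⟩
    refine ⟨⟨f g, mem_map_of_mem f hg⟩, ?_⟩
    rintro ⟨_, x, hx, rfl⟩
    exact (h x hx).imp fun m hm => Subtype.ext hm

lemma isCyclicStep_iff (hBA : B ≤ A) [hA : A.Normal] [hB : B.Normal] :
    IsCyclicStep B A ↔ IsCyclic (A.map (QuotientGroup.mk' B)) := by
  rw [isCyclic_map_iff, QuotientGroup.ker_mk']
  exact ⟨fun h => h.exists_zpow, fun h => ⟨hB, hA, hBA, h⟩⟩

lemma IsCyclicStep.comap (f : Γ →* G) (h : IsCyclicStep B A) :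
    IsCyclicStep (B.comap f) (A.comap f) := by
  have := h.normal_left
  refine ⟨h.normal_left.comap f, h.normal_right.comap f, comap_mono h.le, ?_⟩
  have := h.normal_right
  have hcyclic := (isCyclicStep_iff h.le).1 h
  have hcyclic' : IsCyclic ((A.comap f).map ((QuotientGroup.mk' B).comp f)) := by
    refine isCyclic_of_le (H' := A.map (QuotientGroup.mk' B)) ?_
    rw [← map_map]
    exact map_mono (map_comap_le f A)
  rwa [isCyclic_map_iff, ← MonoidHom.comap_ker, QuotientGroup.ker_mk'] at hcyclic'

lemma IsCyclicStep.map {f : G →* Γ} (hf : Function.Surjective f) (h : IsCyclicStep B A) :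
    IsCyclicStep (B.map f) (A.map f) := by
  obtain ⟨g, hg, hgA⟩ := h.exists_zpow
  refine ⟨h.normal_left.map f hf, h.normal_right.map f hf, map_mono h.le, f g,
    mem_map_of_mem f hg, ?_⟩
  rintro _ ⟨x, hx, rfl⟩
  obtain ⟨m, hm⟩ := hgA x hx
  exact ⟨m, by simpa only [map_mul, map_inv, map_zpow] using mem_map_of_mem f hm⟩

lemma isSupersoluble_iff :
    IsSupersoluble G ↔ Relation.ReflTransGen (IsCyclicStep (G := G)) ⊥ ⊤ := by
  constructor
  · rintro ⟨k, c, hbot, htop, hnormal, hle, hcyclic⟩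
    have reach (i : Fin (k + 1)) : Relation.ReflTransGen IsCyclicStep ⊥ (c i) := by
      induction i using Fin.induction with
      | zero => rw [hbot]
      | succ i ih => exact ih.tail ⟨hnormal _, hnormal _, hle i, hcyclic i⟩
    exact htop ▸ reach (Fin.last k)
  · unfold IsSupersoluble
    generalize (⊤ : Subgroup G) = A
    intro h
    induction h with
    | refl =>
      exact ⟨0, fun _ => ⊥, rfl, rfl, fun _ => inferInstance, fun i => i.elim0, fun i => i.elim0⟩
    | @tail B A _ step ih =>
      obtain ⟨k, c, hbot, htop, hnormal, hle, hcyclic⟩ := ih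
      refine ⟨k + 1, Fin.snoc (α := fun _ => Subgroup G) c A, ?_, Fin.snoc_last _ _,
        fun i => ?_, fun i => ?_, fun i => ?_⟩
      · rw [← Fin.castSucc_zero, Fin.snoc_castSucc, hbot]
      all_goals refine Fin.lastCases ?_ (fun i => ?_) i
      · rw [Fin.snoc_last]
        exact step.normal_right
      · rw [Fin.snoc_castSucc]
        exact hnormal i
      · rw [Fin.snoc_castSucc, Fin.succ_last, Fin.snoc_last, htop]
        exact step.le
      · rw [Fin.snoc_castSucc, Fin.succ_castSucc, Fin.snoc_castSucc]
        exact hle i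
      · rw [Fin.snoc_castSucc, Fin.succ_last, Fin.snoc_last, htop]
        exact step.exists_zpow
      · rw [Fin.snoc_castSucc, Fin.succ_castSucc, Fin.snoc_castSucc]
        exact hcyclic i

lemma IsSupersoluble.of_injective (h : IsSupersoluble G) {f : Γ →* G}
    (hf : Function.Injective f) : IsSupersoluble Γ := by
  rw [isSupersoluble_iff] at h ⊢
  simpa only [Function.onFun, MonoidHom.comap_bot, (MonoidHom.ker_eq_bot_iff f).2 hf,
    comap_top] using h.lift (p := IsCyclicStep) (fun A => A.comap f) fun _ _ step => step.comap f

lemma IsSupersoluble.of_surjective (h : IsSupersoluble G) {f : G →* Γ}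
    (hf : Function.Surjective f) : IsSupersoluble Γ := by
  rw [isSupersoluble_iff] at h ⊢
  simpa only [Function.onFun, Subgroup.map_bot, map_top_of_surjective f hf] using
    h.lift (p := IsCyclicStep) (fun A => A.map f) fun _ _ step => step.map hf

lemma exists_normal_prime_card_le_of_isCyclic [Finite A] [A.Normal] [IsCyclic A] (hA : A ≠ ⊥) :
    ∃ N ≤ A, N.Normal ∧ (Nat.card N).Prime := by
  obtain ⟨s, hs, hsA⟩ := Nat.exists_prime_and_dvd (mt A.card_eq_one.1 hA)
  have := Fact.mk hs
  obtain ⟨x, hx⟩ := exists_prime_orderOf_dvd_card' s hsA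
  have hchar : (zpowers x).Characteristic := characteristic_iff_map_le.2 fun φ => by
    obtain ⟨m, hm⟩ := φ.toMonoidHom.map_cyclic
    rw [MonoidHom.map_zpowers, zpowers_le, hm]
    exact zpow_mem (mem_zpowers x) m
  refine ⟨(zpowers x).map A.subtype, map_subtype_le _,
    ConjAct.normal_of_characteristic_of_normal, ?_⟩
  rwa [card_map_of_injective A.subtype_injective, Nat.card_zpowers, hx]

lemma IsSupersoluble.exists_normal_prime_card [Finite G] [Nontrivial G] (h : IsSupersoluble G) :
    ∃ N : Subgroup G, N.Normal ∧ (Nat.card N).Prime := by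
  have first_step : ∀ C : Subgroup G, Relation.ReflTransGen IsCyclicStep ⊥ C → C ≠ ⊥ →
      ∃ A : Subgroup G, A ≠ ⊥ ∧ IsCyclicStep ⊥ A := by
    intro C hC
    induction hC with
    | refl => exact fun h => (h rfl).elim
    | @tail B A _ step ih =>
      intro hA
      rcases eq_or_ne B ⊥ with rfl | hB
      · exact ⟨A, hA, step⟩
      · exact ih hB
  obtain ⟨A, hA, step⟩ := first_step ⊤ (isSupersoluble_iff.1 h) top_ne_bot
  have := step.normal_right
  have : IsCyclic A := by
    have hcyclic := (isCyclic_map_iff (A := A) (MonoidHom.id G)).2 step.exists_zpow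
    rwa [Subgroup.map_id] at hcyclic
  obtain ⟨N, -, hN⟩ := exists_normal_prime_card_le_of_isCyclic hA
  exact ⟨N, hN⟩

lemma relIndex_eq_of_subset_mul (hQ : Q ≤ Y) (h : (Y : Set G) ⊆ (Q : Set G) * (S : Set G)) :
    S.relIndex Y = S.relIndex Q := by
  refine (Nat.card_congr (Equiv.ofBijective (quotientSubgroupOfEmbeddingOfLE S hQ)
    ⟨(quotientSubgroupOfEmbeddingOfLE S hQ).injective, ?_⟩)).symm
  rintro ⟨y, hy⟩
  obtain ⟨q, hq, s, hs, rfl⟩ := h hy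
  refine ⟨QuotientGroup.mk ⟨q, hq⟩, QuotientGroup.eq.2 ?_⟩
  simpa [mem_subgroupOf] using hs

lemma relIndex_dvd_relIndex_of_le_normalizer (hS : S ≤ Y) (hK : K ≤ Y)
    (hKY : Y ≤ normalizer K) : S.relIndex K ∣ S.relIndex Y := by
  have relIndex_sup : S.relIndex (K ⊔ S) = S.relIndex K :=
    relIndex_eq_of_subset_mul le_sup_left
      (coe_mul_of_right_le_normalizer_left K S (hS.trans hKY)).subset
  rw [← relIndex_sup, ← relIndex_mul_relIndex S (K ⊔ S) Y le_sup_right (sup_le hK hS)]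
  exact dvd_mul_right _ _

end Supersoluble

section SylowTower

open Subgroup

variable {G : Type*} [Group G] [Finite G] {r : ℕ} [Fact r.Prime]

lemma sylow_normal_of_sup_normal {N : Subgroup G} [N.Normal] (hN : (Nat.card N).Prime)
    (hNr : Nat.card N ≤ r) (R : Sylow r G) (hRN : (R ⊔ N : Subgroup G).Normal) :
    (R : Subgroup G).Normal := by
  have frattini : N ⊔ normalizer (R : Set G) = ⊤ := by
    have := R.normalizer_sup_eq_top' (N := (R ⊔ N : Subgroup G)) le_sup_left
    refine top_le_iff.1 (this.ge.trans ?_)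
    exact sup_le le_sup_right (sup_le (le_normalizer.trans le_sup_right) le_sup_left)
  have card_dvd : Nat.card (Sylow r G) ∣ Nat.card N := by
    have covers : ((⊤ : Subgroup G) : Set G) ⊆ (N : Set G) * (normalizer (R : Set G) : Set G) := by
      rw [← frattini, normal_mul]
    rw [R.card_eq_index_normalizer, ← relIndex_top_right, relIndex_eq_of_subset_mul le_top covers]
    exact relIndex_dvd_card _ N
  have card_eq_one : Nat.card (Sylow r G) = 1 := by
    rcases hNr.eq_or_lt with hNr | hNr
    · have hNR : N ≤ R := (IsPGroup.of_card (n := 1) (by rw [hNr, pow_one])).le_sylow_of_normal R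
      rw [R.card_eq_index_normalizer, index_eq_one, ← frattini]
      exact (sup_eq_right.2 (hNR.trans le_normalizer)).symm
    · exact (card_sylow_modEq_one r G).eq_of_lt_of_lt
        ((Nat.le_of_dvd hN.pos card_dvd).trans_lt hNr) (Fact.out : r.Prime).one_lt
  have := (Nat.card_eq_one_iff_unique.1 card_eq_one).1
  exact R.normal_of_subsingleton

lemma IsSupersoluble.sylow_normal (hG : IsSupersoluble G)
    (hr : ∀ s : ℕ, s.Prime → s ∣ Nat.card G → s ≤ r) (R : Sylow r G) :
    (R : Subgroup G).Normal := by
  induction hn : Nat.card G using Nat.strong_induction_on generalizing G with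
  | _ n ih =>
  subst hn
  rcases subsingleton_or_nontrivial G with hsub | hnontriv
  · exact Subsingleton.elim ⊥ (R : Subgroup G) ▸ inferInstance
  obtain ⟨N, hN, hNprime⟩ := hG.exists_normal_prime_card
  have quotient_normal : (R.mapSurjective (QuotientGroup.mk'_surjective N) :
      Subgroup (G ⧸ N)).Normal := by
    refine ih (Nat.card (G ⧸ N)) ?_ (hG.of_surjective (QuotientGroup.mk'_surjective N))
      (fun s hs hsG => hr s hs (hsG.trans (card_quotient_dvd_card N))) _ rfl
    rw [card_eq_card_quotient_mul_card_subgroup N]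
    exact lt_mul_of_one_lt_right Nat.card_pos hNprime.one_lt
  refine sylow_normal_of_sup_normal hNprime (hr _ hNprime (card_subgroup_dvd_card N)) R ?_
  rw [← QuotientGroup.ker_mk' N, ← comap_map_eq, ← R.coe_mapSurjective]
  exact quotient_normal.comap _

end SylowTower

section MaximalSubgroups

open Subgroup

variable {G Γ : Type*} [Group G] [Group Γ] {L M N P : Subgroup G} {p : ℕ}

lemma le_of_forall_orderOf_eq_prime_pow [Finite L]
    (h : ∀ q : ℕ, q.Prime → ∀ z ∈ L, (∃ k, orderOf z = q ^ k) → z ∈ M) : L ≤ M := by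
  rw [← relIndex_eq_one]
  by_contra hne
  obtain ⟨q, hq, hdvd⟩ := Nat.exists_prime_and_dvd hne
  have := Fact.mk hq
  obtain ⟨S⟩ : Nonempty (Sylow q L) := inferInstance
  have hSM : S ≤ M.subgroupOf L := by
    intro z hz
    obtain ⟨k, hk⟩ := IsPGroup.iff_orderOf.1 S.2 ⟨z, hz⟩
    exact h q hq z z.2 ⟨k, by rw [← hk, orderOf_mk z hz, orderOf_coe]⟩
  exact S.not_dvd_index (hdvd.trans (index_dvd_of_le hSM))

lemma mem_of_zpow_mem_of_isCoprime {y : G} {m n : ℤ} (hmn : IsCoprime m n) (hm : y ^ m ∈ L)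
    (hn : y ^ n ∈ L) : y ∈ L := by
  obtain ⟨a, b, hab⟩ := hmn
  rw [← zpow_one y, ← hab, zpow_add, mul_comm a, mul_comm b, zpow_mul, zpow_mul]
  exact mul_mem (zpow_mem hm a) (zpow_mem hn b)

lemma IsMaximalIn.isCoatom_subgroupOf (h : IsMaximalIn M P) : IsCoatom (M.subgroupOf P) := by
  refine ⟨fun eq => h.1.not_ge (subgroupOf_eq_top.1 eq), fun L hL => ?_⟩
  have hML : M < L.map P.subtype := by
    rw [← map_subgroupOf_eq_of_le h.1.le]
    exact (map_lt_map_iff_of_injective P.subtype_injective).2 hL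
  refine map_injective P.subtype_injective ?_
  rw [h.2 _ hML (map_subtype_le L), ← MonoidHom.range_eq_map, range_subtype]

lemma isMaximalIn_map_subtype {M : Subgroup P} (h : IsCoatom M) :
    IsMaximalIn (M.map P.subtype) P := by
  refine ⟨(map_subtype_le M).lt_of_ne fun eq => h.1 ?_, fun L hML hLP => ?_⟩
  · rw [← comap_map_eq_self_of_injective P.subtype_injective M, eq]
    exact subgroupOf_self (H := P)
  · obtain ⟨L, rfl⟩ := exists_map_subtype_eq hLP
    rw [h.2 L ((map_lt_map_iff_of_injective P.subtype_injective).1 hML),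
      ← MonoidHom.range_eq_map, range_subtype]

lemma exists_isMaximalIn [Finite P] (h : L < P) : ∃ M, L ≤ M ∧ IsMaximalIn M P := by
  obtain ⟨M, hM, hLM⟩ := (eq_top_or_exists_le_coatom (L.subgroupOf P)).resolve_left
    fun eq => h.not_ge (subgroupOf_eq_top.1 eq)
  exact ⟨_, map_subgroupOf_eq_of_le h.le ▸ map_mono hLM, isMaximalIn_map_subtype hM⟩

lemma normal_of_isCoatom_of_isPGroup [Finite Γ] [Fact p.Prime] (hΓ : IsPGroup p Γ)
    {M : Subgroup Γ} (hM : IsCoatom M) : M.Normal :=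
  have := hΓ.isNilpotent
  NormalizerCondition.normal_of_coatom _ Group.normalizerCondition_of_isNilpotent hM

lemma index_eq_of_isCoatom_of_isPGroup [Finite Γ] [Fact p.Prime] (hΓ : IsPGroup p Γ)
    {M : Subgroup Γ} (hM : IsCoatom M) : M.index = p := by
  have hp : p.Prime := Fact.out
  obtain ⟨n, hn⟩ := IsPGroup.iff_card.1 (hΓ.to_subgroup M)
  obtain ⟨k, hk⟩ := IsPGroup.iff_card.1 hΓ
  have hlt : Nat.card M < Nat.card Γ := (card_le_card_group M).lt_of_ne
    fun eq => hM.1 ((card_eq_iff_eq_top M).1 eq)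
  rw [hn, hk, Nat.pow_lt_pow_iff_right hp.one_lt] at hlt
  obtain ⟨K, hK, hMK⟩ := Sylow.exists_subgroup_card_pow_succ (hk ▸ pow_dvd_pow p hlt) hn
  have K_eq_top : K = ⊤ := by
    refine hM.2 K (hMK.lt_of_ne ?_)
    rintro rfl
    exact (Nat.pow_lt_pow_right hp.one_lt n.lt_succ_self).ne (hn.symm.trans hK)
  have card_mul := M.card_mul_index
  rw [hn, ← card_top, ← K_eq_top, hK, pow_succ] at card_mul
  exact Nat.eq_of_mul_eq_mul_left (pow_pos hp.pos n) card_mul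

lemma IsMaximalIn.relIndex_eq [Finite P] [Fact p.Prime] (h : IsMaximalIn M P)
    (hP : IsPGroup p P) : M.relIndex P = p :=
  index_eq_of_isCoatom_of_isPGroup hP h.isCoatom_subgroupOf

/-- The Frattini subgroup of `P`, as a subgroup of the ambient group. -/
def frattiniIn (P : Subgroup G) : Subgroup G :=
  (frattini P).map P.subtype

lemma frattiniIn_le (P : Subgroup G) : frattiniIn P ≤ P :=
  map_subtype_le _

lemma frattiniIn_le_of_isMaximalIn (h : IsMaximalIn M P) : frattiniIn P ≤ M :=
  map_subgroupOf_eq_of_le h.1.le ▸ map_mono (frattini_le_coatom h.isCoatom_subgroupOf)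

lemma frattiniIn_normal [P.Normal] : (frattiniIn P).Normal :=
  ConjAct.normal_of_characteristic_of_normal

lemma eq_of_le_sup_frattiniIn [Finite P] (hL : L ≤ P) (h : P ≤ L ⊔ frattiniIn P) : L = P := by
  by_contra hne
  obtain ⟨M, hLM, hM⟩ := exists_isMaximalIn (hL.lt_of_ne hne)
  exact hM.1.not_ge (h.trans (sup_le hLM (frattiniIn_le_of_isMaximalIn hM)))

lemma commutator_le_frattini_of_isPGroup [Finite Γ] [hp : Fact p.Prime] (hΓ : IsPGroup p Γ) :
    commutator Γ ≤ frattini Γ := by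
  refine le_iInf₂ fun M hM => ?_
  have := normal_of_isCoatom_of_isPGroup hΓ hM
  rw [← Normal.quotient_commutative_iff_commutator_le]
  have card_quotient : Nat.card (Γ ⧸ M) = p := index_eq_of_isCoatom_of_isPGroup hΓ hM
  exact (isCyclic_of_prime_card card_quotient).isMulCommutative

lemma pow_mem_frattini_of_isPGroup [Finite Γ] [Fact p.Prime] (hΓ : IsPGroup p Γ) (x : Γ) :
    x ^ p ∈ frattini Γ := by
  refine mem_iInf.2 fun M => mem_iInf.2 fun hM => ?_
  have := normal_of_isCoatom_of_isPGroup hΓ hM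
  exact index_eq_of_isCoatom_of_isPGroup hΓ hM ▸ pow_index_mem M x

lemma commutator_le_frattiniIn [Finite P] [Fact p.Prime] (hP : IsPGroup p P) :
    ⁅P, P⁆ ≤ frattiniIn P := by
  rw [← map_subtype_commutator]
  exact map_mono (commutator_le_frattini_of_isPGroup hP)

lemma pow_mem_frattiniIn [Finite P] [Fact p.Prime] (hP : IsPGroup p P) {x : G} (hx : x ∈ P) :
    x ^ p ∈ frattiniIn P :=
  mem_map_of_mem P.subtype (pow_mem_frattini_of_isPGroup hP ⟨x, hx⟩)

lemma le_normalizer_of_frattiniIn_le [Finite P] [Fact p.Prime] (hP : IsPGroup p P)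
    (hM : frattiniIn P ≤ M) (hMP : M ≤ P) : P ≤ normalizer M :=
  le_normalizer_iff_commutator_le_right.2
    ((commutator_mono le_rfl hMP).trans ((commutator_le_frattiniIn hP).trans hM))

-- A subgroup maximal with respect to avoiding `x` is a maximal subgroup, because `P / frattiniIn P`
-- is elementary abelian.
lemma exists_isMaximalIn_notMem [Finite G] [hp : Fact p.Prime] (hP : IsPGroup p P)
    (hL : frattiniIn P ≤ L) (hLP : L ≤ P) {x : G} (hx : x ∈ P) (hxL : x ∉ L) :
    ∃ M, IsMaximalIn M P ∧ L ≤ M ∧ x ∉ M := by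
  obtain ⟨M, ⟨hLM, hMP, hxM⟩, hmax⟩ :=
    (Set.toFinite {M | L ≤ M ∧ M ≤ P ∧ x ∉ M}).exists_maximal ⟨L, le_rfl, hLP, hxL⟩
  have mem_of_lt {N : Subgroup G} (hMN : M < N) (hNP : N ≤ P) : x ∈ N := by
    by_contra hxN
    exact hMN.not_ge (hmax ⟨hLM.trans hMN.le, hNP, hxN⟩ hMN.le)
  refine ⟨M, ⟨hMP.lt_of_ne fun eq => hxM (eq ▸ hx), fun N hMN hNP => ?_⟩, hLM, hxM⟩
  refine hNP.antisymm fun y hy => ?_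
  by_contra hyN
  have hyM : zpowers y ≤ normalizer M :=
    (zpowers_le.2 hy).trans (le_normalizer_of_frattiniIn_le hP (hL.trans hLM) hMP)
  have hx_sup : x ∈ zpowers y ⊔ M := by
    refine mem_of_lt (le_sup_right.lt_of_ne fun eq => hyN (hMN.le ?_))
      (sup_le (zpowers_le.2 hy) hMP)
    exact eq ▸ mem_sup_left (mem_zpowers y)
  obtain ⟨_, ⟨k, rfl⟩, m, hm, rfl⟩ := (mem_sup_of_le_normalizer hyM).1 hx_sup
  have hyp : y ^ (p : ℤ) ∈ M := by
    rw [zpow_natCast]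
    exact hLM (hL (pow_mem_frattiniIn hP hy))
  have hyk : y ^ k ∈ N := (mul_mem_cancel_right (hMN.le hm)).1 (mem_of_lt hMN hNP)
  refine hyN (mem_of_zpow_mem_of_isCoprime ?_ (hMN.le hyp) hyk)
  rw [(Nat.prime_iff_prime_int.1 hp.out).coprime_iff_not_dvd]
  rintro ⟨j, rfl⟩
  exact hxM (mul_mem (by simpa only [zpow_mul] using zpow_mem hyp j) hm)

end MaximalSubgroups

section Permutable

open Subgroup

variable {G : Type*} [Group G] {A Q S F : Subgroup G} {q : ℕ}

lemma commute_of_mul_subset (h : (A : Set G) * (Q : Set G) ⊆ (Q : Set G) * (A : Set G)) :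
    Commute (A : Set G) (Q : Set G) := by
  refine h.antisymm ?_
  have := Set.inv_subset_inv.2 h
  rwa [mul_inv_rev, mul_inv_rev, inv_coe_set, inv_coe_set] at this

lemma coe_sup_of_commute (h : Commute (A : Set G) (Q : Set G)) :
    ((A ⊔ Q : Subgroup G) : Set G) = (A : Set G) * (Q : Set G) := by
  let AQ : Subgroup G :=
    { carrier := (A : Set G) * (Q : Set G)
      one_mem' := ⟨1, one_mem A, 1, one_mem Q, one_mul 1⟩
      mul_mem' := fun {x y} hx hy => by
        have := Set.mul_mem_mul hx hy
        rwa [h.symm.mul_mul_mul_comm, coe_mul_coe, coe_mul_coe] at this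
      inv_mem' := fun {x} hx => by
        have := Set.inv_mem_inv.2 hx
        rwa [mul_inv_rev, inv_coe_set, inv_coe_set, ← h.eq] at this }
  refine (SetLike.coe_subset_coe.2 (sup_le ?_ ?_ : A ⊔ Q ≤ AQ)).antisymm ?_
  · exact fun a ha => ⟨a, ha, 1, one_mem Q, mul_one a⟩
  · exact fun x hx => ⟨1, one_mem A, x, hx, one_mul x⟩
  · rintro _ ⟨a, ha, x, hx, rfl⟩
    exact mul_mem_sup ha hx

lemma commute_iSup {ι : Sort*} {A : ι → Subgroup G}
    (h : ∀ i, Commute (A i : Set G) (Q : Set G)) :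
    Commute ((⨆ i, A i : Subgroup G) : Set G) (Q : Set G) := by
  refine commute_of_mul_subset ?_
  rintro _ ⟨a, ha, x, hx, rfl⟩
  induction ha using iSup_induction' generalizing x with
  | hp i a ha =>
    obtain ⟨y, hy, b, hb, eq⟩ := (h i).le (Set.mul_mem_mul ha hx)
    exact ⟨y, hy, b, mem_iSup_of_mem i hb, eq⟩
  | h1 => exact ⟨x, hx, 1, one_mem _, by simp⟩
  | hmul a b _ _ iha ihb =>
    obtain ⟨y, hy, b', hb', eqb⟩ := ihb x hx
    obtain ⟨z, hz, a', ha', eqa⟩ := iha y hy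
    refine ⟨z, hz, a' * b', mul_mem ha' hb', ?_⟩
    simp only at eqa eqb ⊢
    rw [← mul_assoc, eqa, mul_assoc, eqb, mul_assoc]

lemma commute_smul (g : G) (h : Commute (A : Set G) (Q : Set G)) :
    Commute ((MulAut.conj g • A : Subgroup G) : Set G)
      ((MulAut.conj g • Q : Subgroup G) : Set G) := by
  rw [coe_pointwise_smul, coe_pointwise_smul, Commute, SemiconjBy, ← smul_mul', ← smul_mul', h.eq]

lemma relIndex_inf_eq_prime_pow [Finite Q] [F.Normal] (hq : q.Prime)
    (h : Commute (S : Set G) (Q : Set G)) (hQ : IsPGroup q Q) (hSA : S ≤ A) (hA : A ≤ S ⊔ Q) :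
    ∃ k, S.relIndex (A ⊓ F) = q ^ k := by
  have := Fact.mk hq
  obtain ⟨n, hn⟩ := IsPGroup.iff_card.1 hQ
  have relIndex_sup : S.relIndex (S ⊔ Q) = S.relIndex Q :=
    relIndex_eq_of_subset_mul le_sup_right ((coe_sup_of_commute h).trans h.eq).subset
  have dvd : S.relIndex (A ⊓ F) ∣ q ^ n := calc
    S.relIndex (A ⊓ F) ∣ S.relIndex A := relIndex_dvd_relIndex_of_le_normalizer hSA inf_le_left
      (le_normalizer_inf le_normalizer le_normalizer_of_normal)
    _ ∣ S.relIndex (S ⊔ Q) := ⟨_, (relIndex_mul_relIndex S A (S ⊔ Q) hSA hA).symm⟩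
    _ = S.relIndex Q := relIndex_sup
    _ ∣ Nat.card Q := relIndex_dvd_card S Q
    _ = q ^ n := hn
  obtain ⟨k, -, hk⟩ := (Nat.dvd_prime_pow hq).1 dvd
  exact ⟨k, hk⟩

lemma SPermutable.commute_sylow [Finite G] [Fact q.Prime] (h : SPermutable S) (Q : Sylow q G) :
    Commute (S : Set G) (Q : Set G) := by
  refine h q Fact.out Q ⟨le_top, Q.2, ?_⟩
  have := Q.not_dvd_index
  rwa [← relIndex_top_right] at this

end Permutable

section ChiefFactor

open Subgroup

variable {G : Type*} [Group G] {A B L M N : Subgroup G}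

lemma sup_inf_le_of_le_normalizer (h : M ≤ normalizer N) (hML : M ≤ L) :
    (M ⊔ N) ⊓ L ≤ M ⊔ (N ⊓ L) := by
  rintro x ⟨hx, hxL⟩
  obtain ⟨m, hm, n, hn, rfl⟩ := (mem_sup_of_le_normalizer h).1 hx
  exact mul_mem_sup hm ⟨hn, (mul_mem_cancel_left (hML hm)).1 hxL⟩

lemma IsChiefFactor.eq_or_eq (h : IsChiefFactor A B) (hL : L.Normal) (hBL : B ≤ L) (hLA : L ≤ A) :
    L = B ∨ L = A := by
  by_contra! hne
  exact h.2.2.2 L hL (hBL.lt_of_ne hne.1.symm) (hLA.lt_of_ne hne.2)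

lemma exists_isChiefFactor_left [Finite G] (hA : A.Normal) (hL : L.Normal) (h : L < A) :
    ∃ B, L ≤ B ∧ IsChiefFactor A B := by
  obtain ⟨B, ⟨hB, hLB, hBA⟩, hmax⟩ :=
    (Set.toFinite {B : Subgroup G | B.Normal ∧ L ≤ B ∧ B < A}).exists_maximal ⟨L, hL, le_rfl, h⟩
  exact ⟨B, hLB, hA, hB, hBA, fun M hM hBM hMA =>
    hBM.not_ge (hmax ⟨hM, hLB.trans hBM.le, hMA⟩ hBM.le)⟩

lemma exists_isChiefFactor_right [Finite G] (hL : L.Normal) (hB : B.Normal) (h : B < L) :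
    ∃ A, A ≤ L ∧ IsChiefFactor A B := by
  obtain ⟨A, ⟨hA, hBA, hAL⟩, hmin⟩ :=
    (Set.toFinite {A : Subgroup G | A.Normal ∧ B < A ∧ A ≤ L}).exists_minimal ⟨L, hL, h, le_rfl⟩
  exact ⟨A, hAL, hA, hB, hBA, fun M hM hBM hMA =>
    hMA.not_ge (hmin ⟨hM, hBM, hMA.le.trans hAL⟩ hMA.le)⟩

lemma relIndex_inf_of_sup_eq [B.Normal] (h : B ⊔ L = A) : (B ⊓ L).relIndex L = B.relIndex A := by
  rw [inf_relIndex_right, ← h, relIndex_sup_left]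

lemma IsChiefFactor.inf (h : IsChiefFactor A B) (hN : N.Normal) (hAN : ¬ A ⊓ N ≤ B) :
    IsChiefFactor (A ⊓ N) (B ⊓ N) ∧ (B ⊓ N).relIndex (A ⊓ N) = B.relIndex A := by
  have ⟨hA, hB, hBA, _⟩ := h
  have hsup : B ⊔ A ⊓ N = A :=
    (h.eq_or_eq (sup_normal B (A ⊓ N)) le_sup_left (sup_le hBA.le inf_le_left)).resolve_left
      fun eq => hAN (sup_eq_left.1 eq)
  refine ⟨⟨inferInstance, inferInstance, (inf_le_inf_right N hBA.le).lt_of_ne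
    fun eq => hAN (eq ▸ inf_le_left), fun L hL hBL hLA => ?_⟩, ?_⟩
  · obtain ⟨hLA', hLN⟩ := le_inf_iff.1 hLA.le
    rcases h.eq_or_eq (sup_normal L B) le_sup_right (sup_le hLA' hBA.le) with eq | eq
    · exact hBL.not_ge (le_inf (sup_eq_right.1 eq) hLN)
    · have := sup_inf_le_of_le_normalizer (N := B) le_normalizer_of_normal hLN
      rw [eq] at this
      exact hLA.not_ge (this.trans (sup_le le_rfl hBL.le))
  · rw [← relIndex_inf_of_sup_eq hsup, ← inf_assoc, inf_eq_left.2 hBA.le]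

lemma IsChiefFactor.sup (h : IsChiefFactor A B) (hN : N.Normal) (hAN : A ⊓ N ≤ B) :
    IsChiefFactor (A ⊔ N) (B ⊔ N) ∧ (B ⊔ N).relIndex (A ⊔ N) = B.relIndex A := by
  have ⟨hA, hB, hBA, _⟩ := h
  have hinf : (B ⊔ N) ⊓ A = B := by
    refine le_antisymm ?_ (le_inf le_sup_left hBA.le)
    exact (sup_inf_le_of_le_normalizer le_normalizer_of_normal hBA.le).trans
      (sup_le le_rfl (inf_comm A N ▸ hAN))
  refine ⟨⟨inferInstance, inferInstance, (sup_le_sup_right hBA.le N).lt_of_ne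
    fun eq => hBA.ne ?_, fun L hL hBL hLA => ?_⟩, ?_⟩
  · rw [← hinf, eq, inf_eq_right.2 le_sup_left]
  · obtain ⟨hBL', hNL⟩ := sup_le_iff.1 hBL.le
    have hL_le : L ≤ N ⊔ A ⊓ L := by
      have := sup_inf_le_of_le_normalizer (N := A) le_normalizer_of_normal hNL
      rwa [sup_comm N A, inf_eq_right.2 hLA.le] at this
    rcases h.eq_or_eq (normal_inf_normal A L) (le_inf hBA.le hBL') inf_le_left with eq | eq
    · rw [eq, sup_comm] at hL_le
      exact hBL.not_ge hL_le
    · exact hLA.not_ge (sup_le (inf_eq_left.1 eq) hNL)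
  · have hsup : (B ⊔ N) ⊔ A = A ⊔ N := by
      rw [sup_right_comm, sup_eq_right.2 hBA.le]
    rw [← relIndex_inf_of_sup_eq hsup, hinf]

lemma IsChiefFactor.map_mk' {K : Subgroup G} [K.Normal] (h : IsChiefFactor A B) (hK : K ≤ B) :
    IsChiefFactor (A.map (QuotientGroup.mk' K)) (B.map (QuotientGroup.mk' K)) ∧
      (B.map (QuotientGroup.mk' K)).relIndex (A.map (QuotientGroup.mk' K)) = B.relIndex A := by
  have ⟨hA, hB, hBA, hmax⟩ := h
  have hsurj := QuotientGroup.mk'_surjective K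
  have comap_map {L : Subgroup G} (hL : K ≤ L) :
      (L.map (QuotientGroup.mk' K)).comap (QuotientGroup.mk' K) = L :=
    comap_map_eq_self ((QuotientGroup.ker_mk' K).trans_le hL)
  refine ⟨⟨hA.map _ hsurj, hB.map _ hsurj, ?_, fun L hL hBL hLA => ?_⟩, ?_⟩
  · rwa [← comap_lt_comap_of_surjective hsurj, comap_map hK, comap_map (hK.trans hBA.le)]
  · rw [← comap_lt_comap_of_surjective hsurj] at hBL hLA
    rw [comap_map hK] at hBL
    rw [comap_map (hK.trans hBA.le)] at hLA
    exact hmax _ (hL.comap _) hBL hLA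
  · rw [relIndex_map_map, QuotientGroup.ker_mk', sup_eq_left.2 hK,
      sup_eq_left.2 (hK.trans hBA.le)]

end ChiefFactor

section Hypercenter

open Subgroup

variable {G : Type*} [Group G] {A B K M N : Subgroup G}

/-- `N` is hypercyclically embedded in the ambient group: `N` is normal and the chief factors below
`N` have prime order. The `𝔘`-hypercenter is the largest such subgroup. -/
structure IsHypercyclicallyEmbedded (N : Subgroup G) : Prop where
  normal : N.Normal
  prime_relIndex : ∀ A B : Subgroup G, IsChiefFactor A B → A ≤ N → (B.relIndex A).Prime

lemma IsHypercyclicallyEmbedded.sup (hM : IsHypercyclicallyEmbedded M)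
    (hN : IsHypercyclicallyEmbedded N) : IsHypercyclicallyEmbedded (M ⊔ N) := by
  have := hM.normal
  have := hN.normal
  refine ⟨sup_normal M N, fun A B h hA => ?_⟩
  by_cases hAM : A ⊓ M ≤ B
  · obtain ⟨h_sup, relIndex_sup⟩ := h.sup hM.normal hAM
    by_cases hAN : (A ⊔ M) ⊓ N ≤ B ⊔ M
    · have := sup_inf_le_of_le_normalizer (N := N) le_normalizer_of_normal
        (le_sup_right : M ≤ A ⊔ M)
      rw [inf_eq_right.2 (sup_le hA le_sup_left), inf_comm] at this
      exact (h_sup.2.2.1.not_ge (this.trans (sup_le le_sup_right hAN))).elim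
    · obtain ⟨h_inf, relIndex_inf⟩ := h_sup.inf hN.normal hAN
      rw [← relIndex_sup, ← relIndex_inf]
      exact hN.prime_relIndex _ _ h_inf inf_le_right
  · obtain ⟨h_inf, relIndex_inf⟩ := h.inf hM.normal hAM
    exact relIndex_inf ▸ hM.prime_relIndex _ _ h_inf inf_le_right

lemma isHypercyclicallyEmbedded_UHypercenter [Finite G] :
    IsHypercyclicallyEmbedded (UHypercenter G) := by
  obtain ⟨N, hN, hmax⟩ :=
    (Set.toFinite {N : Subgroup G | IsHypercyclicallyEmbedded N}).exists_maximal ⟨⊥, inferInstance,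
      fun A B hAB hA => (not_lt_bot (hAB.2.2.1.trans_le hA)).elim⟩
  have eq_sSup : UHypercenter G = N :=
    le_antisymm (sSup_le fun M hM => le_sup_left.trans (hmax (.sup ⟨hM.1, hM.2⟩ hN) le_sup_right))
      (le_sSup ⟨hN.normal, hN.prime_relIndex⟩)
  exact eq_sSup ▸ hN

lemma isSolvable_of_commutator_le (h : commutator A ≤ B.subgroupOf A) (hBA : B ≤ A)
    (hB : Group.IsSolvable B) : Group.IsSolvable A :=
  Group.isSolvable_of_ker_le_range (inclusion hBA) Abelianization.of <| by
    rwa [Abelianization.ker_of, inclusion_range]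

lemma isSolvable_of_prime_relIndex (hBA : B ≤ A) [B.Normal] (hB : Group.IsSolvable B)
    (h : (B.relIndex A).Prime) : Group.IsSolvable A := by
  have := Fact.mk h
  have hcyclic : IsCyclic (A ⧸ B.subgroupOf A) := isCyclic_of_prime_card (p := B.relIndex A) rfl
  exact isSolvable_of_commutator_le
    (Normal.quotient_commutative_iff_commutator_le.1 hcyclic.isMulCommutative) hBA hB

lemma IsHypercyclicallyEmbedded.isSolvable [Finite G] (hN : IsHypercyclicallyEmbedded N) :
    Group.IsSolvable N := by
  have key : ∀ L : Subgroup G, L.Normal → L ≤ N → Group.IsSolvable L := by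
    intro L
    induction L using WellFoundedLT.induction with
    | ind L ih =>
    intro hL hLN
    rcases eq_or_ne L ⊥ with rfl | hbot
    · infer_instance
    obtain ⟨B, -, hB⟩ := exists_isChiefFactor_left hL inferInstance (bot_lt_iff_ne_bot.2 hbot)
    have hBL := hB.2.2.1
    have := hB.2.1
    exact isSolvable_of_prime_relIndex hBL.le (ih B hBL hB.2.1 (hBL.le.trans hLN))
      (hN.prime_relIndex L B hB hLN)
  exact key N hN.normal le_rfl

/-- The subgroup `Z` of `G` with `Z/K` the `𝔘`-hypercenter of `G/K`. -/
def UHypercenterMod (K : Subgroup G) [K.Normal] : Subgroup G :=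
  (UHypercenter (G ⧸ K)).comap (QuotientGroup.mk' K)

lemma le_UHypercenterMod (K : Subgroup G) [K.Normal] : K ≤ UHypercenterMod K :=
  (QuotientGroup.ker_mk' K).symm.trans_le (MonoidHom.ker_le_comap _ _)

variable [Finite G] [K.Normal]

lemma UHypercenterMod_normal : (UHypercenterMod K).Normal :=
  isHypercyclicallyEmbedded_UHypercenter.normal.comap _

lemma IsChiefFactor.prime_relIndex_of_le_UHypercenterMod (h : IsChiefFactor A B) (hK : K ≤ B)
    (hA : A ≤ UHypercenterMod K) : (B.relIndex A).Prime := by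
  obtain ⟨h_map, relIndex_map⟩ := h.map_mk' hK
  rw [← relIndex_map]
  exact isHypercyclicallyEmbedded_UHypercenter.prime_relIndex _ _ h_map (map_le_iff_le_comap.2 hA)

lemma UHypercenterMod_isSolvable (hK : Group.IsSolvable K) :
    Group.IsSolvable (UHypercenterMod K) := by
  have := (isHypercyclicallyEmbedded_UHypercenter (G := G ⧸ K)).isSolvable
  refine Group.isSolvable_of_ker_le_range (inclusion (le_UHypercenterMod K))
    ((QuotientGroup.mk' K).subgroupComap (UHypercenter (G ⧸ K))) fun x hx => ?_
  have hxK : (x : G) ∈ K := (QuotientGroup.eq_one_iff (x : G)).1 (congrArg Subtype.val hx)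
  exact ⟨⟨x, hxK⟩, rfl⟩

end Hypercenter

section SectionImage

open Subgroup

variable {G X : Type*} [Group G] [Group X] {F L M P T : Subgroup G} {p : ℕ}

lemma relIndex_map_dvd (f : G →* X) (A B : Subgroup G) :
    (A.map f).relIndex (B.map f) ∣ A.relIndex B := by
  rw [relIndex_map_map, relIndex_eq_of_subset_mul (Q := B) le_sup_left]
  · exact relIndex_dvd_of_le_left B le_sup_left
  · rw [mul_normal]
    exact Set.mul_subset_mul_left (SetLike.coe_subset_coe.2 le_sup_right)

/-- The image of `L ∩ F` in `X`, where `φ` presents `X` as a quotient of the subgroup `F`. -/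
def sectionImage (φ : F →* X) (L : Subgroup G) : Subgroup X :=
  (L.subgroupOf F).map φ

variable {φ : F →* X}

lemma sectionImage_mono {A B : Subgroup G} (h : A ≤ B) : sectionImage φ A ≤ sectionImage φ B :=
  map_mono (comap_mono h)

lemma sectionImage_normal (hφ : Function.Surjective φ) (hL : L.Normal) :
    (sectionImage φ L).Normal :=
  (hL.subgroupOf F).map φ hφ

lemma sectionImage_self (hφ : Function.Surjective φ) : sectionImage φ F = ⊤ := by
  rw [sectionImage, subgroupOf_self, map_top_of_surjective φ hφ]

lemma sectionImage_map_subtype (M : Subgroup F) :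
    sectionImage φ (M.map F.subtype) = M.map φ := by
  rw [sectionImage, subgroupOf, comap_map_eq_self_of_injective F.subtype_injective]

lemma sectionImage_sup (hM : M ≤ F) [T.Normal] :
    sectionImage φ (M ⊔ T) = sectionImage φ M ⊔ sectionImage φ T := by
  have hMT : (M ⊔ T).subgroupOf F ≤ M.subgroupOf F ⊔ T.subgroupOf F := by
    rw [← inf_subgroupOf_right (M ⊔ T), ← inf_subgroupOf_right T,
      ← subgroupOf_sup hM inf_le_right]
    exact comap_mono (sup_inf_le_of_le_normalizer le_normalizer_of_normal hM)
  exact ((map_mono hMT).trans_eq (map_sup _ _ φ)).antisymm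
    (sup_le (sectionImage_mono le_sup_left) (sectionImage_mono le_sup_right))

lemma relIndex_sectionImage_dvd (φ : F →* X) (A B : Subgroup G) :
    (sectionImage φ A).relIndex (sectionImage φ B) ∣ A.relIndex (B ⊓ F) := by
  refine (relIndex_map_dvd φ _ _).trans ?_
  rw [subgroupOf, relIndex_comap, subgroupOf_map_subtype]

lemma subgroupComap_subtype_injective (L : Subgroup G) :
    Function.Injective (F.subtype.subgroupComap L) :=
  Function.Injective.of_comp (f := L.subtype)
    (F.subtype_injective.comp (L.subgroupOf F).subtype_injective)

lemma sectionImage_isPGroup (hL : IsPGroup p L) : IsPGroup p (sectionImage φ L) :=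
  (hL.of_injective _ (subgroupComap_subtype_injective L)).map φ

lemma sectionImage_isSolvable [Group.IsSolvable L] : Group.IsSolvable (sectionImage φ L) :=
  have : Group.IsSolvable (L.subgroupOf F) :=
    Group.isSolvable_of_isSolvable_injective (subgroupComap_subtype_injective L)
  Group.isSolvable_of_surjective (φ.subgroupMap_surjective _)

lemma sectionImage_isCyclic [IsCyclic L] : IsCyclic (sectionImage φ L) :=
  have : IsCyclic (L.subgroupOf F) := isCyclic_of_injective _ (subgroupComap_subtype_injective L)
  isCyclic_of_surjective _ (φ.subgroupMap_surjective _)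

lemma sectionImage_hasSupersolubleSupplement (hφ : Function.Surjective φ) (hM : M ≤ F)
    (h : HasSupersolubleSupplement M) : HasSupersolubleSupplement (sectionImage φ M) := by
  obtain ⟨T, hT, hMT⟩ := h
  refine ⟨sectionImage φ T, (hT.of_injective (subgroupComap_subtype_injective T)).of_surjective
    (φ.subgroupMap_surjective _), Set.eq_univ_of_forall fun x => ?_⟩
  obtain ⟨f, rfl⟩ := hφ x
  obtain ⟨m, hm, t, ht, hmt⟩ : (f : G) ∈ (M : Set G) * (T : Set G) := hMT ▸ Set.mem_univ _
  have htF : t ∈ F := (F.mul_mem_cancel_left (hM hm)).1 ((show m * t = f from hmt) ▸ f.2)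
  have hf : f = ⟨m, hM hm⟩ * ⟨t, htF⟩ := Subtype.ext hmt.symm
  exact ⟨φ ⟨m, hM hm⟩, mem_map_of_mem φ (show _ ∈ M.subgroupOf F from hm), φ ⟨t, htF⟩,
    mem_map_of_mem φ (show _ ∈ T.subgroupOf F from ht), by rw [hf, map_mul]⟩

end SectionImage

section SylowTransitive

open Subgroup

variable {X α : Type*} [Group X] {M P Y : Subgroup X} {p r : ℕ}

lemma subsingleton_of_forall_isMaximalIn_isPretransitive [MulAction X α] [Finite P] (hP : P ≠ ⊥)
    (h : ∀ M, IsMaximalIn M P → MulAction.IsPretransitive M α) : Subsingleton α := by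
  have hstab (a : α) : P ≤ MulAction.stabilizer X a := by
    by_contra hPa
    obtain ⟨M, hM, hMP⟩ := exists_isMaximalIn (inf_lt_left.2 hPa)
    have := h M hMP
    refine hMP.1.not_ge fun u hu => ?_
    obtain ⟨m, hm⟩ := MulAction.exists_smul_eq M a (u • a)
    have hmu : (m : X)⁻¹ * u ∈ MulAction.stabilizer X a := by
      rw [MulAction.mem_stabilizer_iff, mul_smul, ← hm, Subgroup.smul_def, inv_smul_smul]
    exact (M.mul_mem_cancel_left (M.inv_mem m.2)).1
      (hM ⟨P.mul_mem (P.inv_mem (hMP.1.le m.2)) hu, hmu⟩)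
  obtain ⟨M, -, hMP⟩ := exists_isMaximalIn (bot_lt_iff_ne_bot.2 hP)
  have := h M hMP
  refine ⟨fun a b => ?_⟩
  obtain ⟨m, rfl⟩ := MulAction.exists_smul_eq M a b
  exact (hstab a (hMP.1.le m.2)).symm

variable [Finite X] [Fact p.Prime] [Fact r.Prime]

lemma IsSupersoluble.exists_sylow_le_normalizer (hY : IsSupersoluble Y)
    (hr : ∀ s : ℕ, s.Prime → s ∣ Nat.card X → s ≤ r) (hYr : ¬ r ∣ Y.index) :
    ∃ R : Sylow r X, Y ≤ normalizer (R : Subgroup X) := by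
  obtain ⟨S⟩ : Nonempty (Sylow r Y) := inferInstance
  have hS : (S : Subgroup Y).Normal :=
    hY.sylow_normal (fun s hs hsY => hr s hs (hsY.trans (card_subgroup_dvd_card Y))) S
  have hSr : ¬ r ∣ ((S : Subgroup Y).map Y.subtype).index := by
    rw [index_map_subtype]
    exact (Fact.out : r.Prime).not_dvd_mul S.not_dvd_index hYr
  exact ⟨(S.2.map Y.subtype).toSylow hSr, le_normalizer_map_subtype_iff.2 hS⟩

lemma HasSupersolubleSupplement.isPretransitive_sylow (h : HasSupersolubleSupplement M)
    (hM : IsPGroup p M) (hpr : p ≠ r) (hr : ∀ s : ℕ, s.Prime → s ∣ Nat.card X → s ≤ r) :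
    MulAction.IsPretransitive M (Sylow r X) := by
  obtain ⟨Y, hY, hMY⟩ := h
  have hYr : ¬ r ∣ Y.index := by
    obtain ⟨k, hk⟩ := IsPGroup.iff_card.1 hM
    rw [← relIndex_top_right, relIndex_eq_of_subset_mul le_top (hMY ▸ Set.subset_univ _)]
    exact fun hd => hpr ((Nat.prime_dvd_prime_iff_eq Fact.out Fact.out).1
      ((Fact.out : r.Prime).dvd_of_dvd_pow (hk ▸ hd.trans (relIndex_dvd_card Y M)))).symm
  obtain ⟨R, hR⟩ := hY.exists_sylow_le_normalizer hr hYr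
  rw [MulAction.isPretransitive_iff_base R]
  intro S
  obtain ⟨x, rfl⟩ := MulAction.exists_smul_eq X R S
  obtain ⟨m, hm, y, hy, rfl⟩ : x ∈ (M : Set X) * (Y : Set X) := hMY ▸ Set.mem_univ x
  refine ⟨⟨m, hm⟩, ?_⟩
  rw [mul_smul, Sylow.smul_eq_iff_mem_normalizer.2 (hR hy), Subgroup.smul_def]

lemma subsingleton_sylow_of_forall_hasSupersolubleSupplement (hP : IsPGroup p P) (hP' : P ≠ ⊥)
    (hpr : p ≠ r) (hr : ∀ s : ℕ, s.Prime → s ∣ Nat.card X → s ≤ r)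
    (h : ∀ M, IsMaximalIn M P → HasSupersolubleSupplement M) : Subsingleton (Sylow r X) :=
  subsingleton_of_forall_isMaximalIn_isPretransitive hP' fun M hM =>
    (h M hM).isPretransitive_sylow (hP.to_le hM.1.le) hpr hr

end SylowTransitive

section Kegel

open Subgroup

variable {G X : Type*} [Group G] [Group X] {F A B O Q S : Subgroup G} {p q : ℕ}
  {φ : F →* X}

lemma sectionImage_le_normalizer (h : O ≤ normalizer A) :
    sectionImage φ O ≤ normalizer (sectionImage φ A) :=
  (map_mono ((comap_mono h).trans (le_normalizer_comap F.subtype))).trans (le_normalizer_map φ)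

lemma dvd_index_sectionImage_of_le_sup [Finite G] [F.Normal] (hp : p.Prime) (hq : q.Prime)
    (hpq : p ≠ q) (hAQ : Commute (A : Set G) (Q : Set G)) (hQ : IsPGroup q Q) (hAB : A ≤ B)
    (hB : B ≤ A ⊔ Q) (hA : p ∣ (sectionImage φ A).index) : p ∣ (sectionImage φ B).index := by
  obtain ⟨k, hk⟩ := relIndex_inf_eq_prime_pow (F := F) hq hAQ hQ hAB hB
  rw [← relIndex_mul_index (sectionImage_mono hAB)] at hA
  refine (hp.dvd_mul.1 hA).resolve_left fun hd => hpq ?_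
  exact (Nat.prime_dvd_prime_iff_eq hp hq).1
    (hp.dvd_of_dvd_pow (hk ▸ hd.trans (relIndex_sectionImage_dvd φ A B)))

lemma commute_iSup_smul (hA : ∀ Q : Sylow q G, Commute (A : Set G) (Q : Set G))
    (O : Subgroup G) (Q : Sylow q G) :
    Commute ((⨆ x : O, MulAut.conj (x : G) • A : Subgroup G) : Set G) (Q : Set G) := by
  refine commute_iSup fun x => ?_
  have h := commute_smul (x : G) (hA ((x : G)⁻¹ • Q))
  rwa [← Sylow.coe_subgroup_smul, smul_inv_smul] at h

variable [Finite G]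

-- Choose `A ≥ S` maximal among the subgroups permuting with the Sylow `q`-subgroups: joining it
-- with its conjugates under one of them changes indices only by powers of `q`.
lemma exists_sylow_le_normalizer_of_commute [F.Normal] [Fact q.Prime] (hp : p.Prime)
    (hpq : p ≠ q) (hS : ∀ Q : Sylow q G, Commute (S : Set G) (Q : Set G))
    (hSp : p ∣ (sectionImage φ S).index) :
    ∃ A, S ≤ A ∧ p ∣ (sectionImage φ A).index ∧
      ∀ Q : Sylow q G, (Q : Subgroup G) ≤ normalizer A := by
  obtain ⟨A, hA⟩ := (Set.toFinite {A : Subgroup G | S ≤ A ∧ p ∣ (sectionImage φ A).index ∧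
    ∀ Q : Sylow q G, Commute (A : Set G) (Q : Set G)}).exists_maximal ⟨S, le_rfl, hSp, hS⟩
  obtain ⟨hSA, hpA, hAQ⟩ := hA.prop
  refine ⟨A, hSA, hpA, fun Q => ?_⟩
  have hle := le_iSup_smul (Q : Subgroup G) A
  have hsup : ⨆ x : Q, MulAut.conj (x : G) • A ≤ A ⊔ Q :=
    iSup_smul_le (le_sup_right.trans le_normalizer) le_sup_left
  have hpB := dvd_index_sectionImage_of_le_sup hp Fact.out hpq (hAQ Q) Q.2 hle hsup hpA
  have hB := hA.eq_of_le ⟨hSA.trans hle, hpB, commute_iSup_smul hAQ Q⟩ hle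
  exact (le_normalizer_iSup_smul (Q : Subgroup G) A).trans_eq
    (congrArg (fun B : Subgroup G => normalizer (B : Set G)) hB.symm)

lemma sectionImage_normalClosure_sylow [Fact q.Prime] [IsSimpleGroup X]
    (hφ : Function.Surjective φ) (hqX : q ∣ Nat.card X) (Q : Sylow q G) :
    sectionImage φ (normalClosure (Q : Set G)) = ⊤ := by
  refine (sectionImage_normal hφ normalClosure_normal).eq_bot_or_eq_top.resolve_left fun h => ?_
  have hdvd := relIndex_sectionImage_dvd φ (normalClosure (Q : Set G)) F
  rw [h, sectionImage_self hφ, relIndex_bot_left, card_top, inf_idem] at hdvd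
  exact Q.not_dvd_index (hqX.trans (hdvd.trans ((relIndex_dvd_index_of_normal _ F).trans
    (index_dvd_of_le le_normalClosure))))

lemma sectionImage_eq_bot_of_commute_sylow [F.Normal] [IsSimpleGroup X] [Finite X]
    [Fact q.Prime] (hφ : Function.Surjective φ) (hp : p.Prime) (hpq : p ≠ q)
    (hqX : q ∣ Nat.card X) (hS : ∀ Q : Sylow q G, Commute (S : Set G) (Q : Set G))
    (hSp : p ∣ (sectionImage φ S).index) : sectionImage φ S = ⊥ := by
  obtain ⟨A, hSA, hAp, hA⟩ := exists_sylow_le_normalizer_of_commute hp hpq hS hSp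
  obtain ⟨Q⟩ : Nonempty (Sylow q G) := inferInstance
  have hQA : normalClosure (Q : Set G) ≤ normalizer A := by
    refine (closure_le _).2 fun y hy => ?_
    obtain ⟨x, hx, hxy⟩ := Group.mem_conjugatesOfSet_iff.1 hy
    obtain ⟨g, rfl⟩ := isConj_iff.1 hxy
    exact hA (g • Q) ((mem_smul_pointwise_iff_exists _ _ _).2 ⟨x, hx, rfl⟩)
  have hAn : (sectionImage φ A).Normal := by
    rw [← normalizer_eq_top_iff, eq_top_iff, ← sectionImage_normalClosure_sylow hφ hqX Q]
    exact sectionImage_le_normalizer hQA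
  have hA' : sectionImage φ A = ⊥ := by
    refine hAn.eq_bot_or_eq_top.resolve_right fun h => ?_
    rw [h, index_top] at hAp
    exact hp.not_dvd_one hAp
  exact le_bot_iff.1 (hA' ▸ sectionImage_mono hSA)

end Kegel

section SimpleSection

open Subgroup

variable {G X : Type*} [Group G] [Group X] {F L M P T : Subgroup G} {p q : ℕ}
  {φ : F →* X}

lemma inf_relIndex_of_le (hL : L ≤ T) : (P ⊓ T).relIndex L = P.relIndex L := by
  rw [← inf_relIndex_right, inf_assoc, inf_of_le_right hL, inf_relIndex_right]

lemma not_dvd_index_sectionImage (hφ : Function.Surjective φ) (hP : IsSylowIn p P F) :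
    ¬ p ∣ (sectionImage φ P).index := by
  intro h
  rw [← relIndex_top_right, ← sectionImage_self hφ] at h
  have := h.trans (relIndex_sectionImage_dvd φ P F)
  rw [inf_idem] at this
  exact hP.2.2 this

lemma sectionImage_eq_bot_of_isSolvable [IsSimpleGroup X] (hX : ¬ Group.IsSolvable X)
    (hφ : Function.Surjective φ) (hL : L.Normal) [Group.IsSolvable L] : sectionImage φ L = ⊥ := by
  refine (sectionImage_normal hφ hL).eq_bot_or_eq_top.resolve_right fun h => hX ?_
  have := sectionImage_isSolvable (φ := φ) (L := L)
  rw [h] at this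
  exact Group.isSolvable_of_surjective (f := (topEquiv (G := X)).toMonoidHom) topEquiv.surjective

variable [Finite G]

lemma sectionImage_inf_eq [Fact p.Prime] [F.Normal] (hP : IsSylowIn p P F) (hT : T.Normal)
    (hTX : sectionImage φ T = ⊤) : sectionImage φ (P ⊓ T) = sectionImage φ P := by
  refine (sectionImage_mono inf_le_left).antisymm (relIndex_eq_one.1 ?_)
  have : Finite (sectionImage φ P) := Finite.of_surjective _ (φ.subgroupMap_surjective _)
  obtain ⟨n, hn⟩ := (sectionImage_isPGroup hP.2.1 (φ := φ)).index
    ((sectionImage φ (P ⊓ T)).subgroupOf (sectionImage φ P))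
  have hdvd : (sectionImage φ (P ⊓ T)).relIndex (sectionImage φ P) ∣ P.relIndex F := calc
    _ ∣ (sectionImage φ (P ⊓ T)).relIndex (sectionImage φ T) := by
      rw [hTX, relIndex_top_right]
      exact relIndex_dvd_index_of_le (sectionImage_mono inf_le_left)
    _ ∣ P.relIndex (T ⊓ F) :=
      inf_relIndex_of_le (inf_le_left : T ⊓ F ≤ T) ▸ relIndex_sectionImage_dvd φ (P ⊓ T) T
    _ ∣ P.relIndex F := relIndex_dvd_relIndex_of_le_normalizer hP.1 inf_le_right
      le_normalizer_of_normal
  cases n with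
  | zero => rwa [pow_zero] at hn
  | succ n =>
    exact absurd (((dvd_pow_self p n.succ_ne_zero).trans hn.symm.dvd).trans hdvd) hP.2.2

lemma card_sectionImage_dvd_of_inf_eq_bot [Fact p.Prime] [F.Normal] (hP : IsSylowIn p P F)
    (hM : IsMaximalIn M P) (hT : T.Normal) (hTX : sectionImage φ T = ⊤)
    (hMT : sectionImage φ (M ⊓ T) = ⊥) : Nat.card (sectionImage φ P) ∣ p := calc
  _ = (sectionImage φ (M ⊓ T)).relIndex (sectionImage φ (P ⊓ T)) := by
    rw [hMT, relIndex_bot_left, sectionImage_inf_eq hP hT hTX]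
  _ ∣ (M ⊓ T).relIndex (P ⊓ T) := by
    simpa only [inf_of_le_left (inf_le_left.trans hP.1 : P ⊓ T ≤ F)] using
      relIndex_sectionImage_dvd φ (M ⊓ T) (P ⊓ T)
  _ = M.relIndex (P ⊓ T) := inf_relIndex_of_le inf_le_right
  _ ∣ M.relIndex P := relIndex_dvd_relIndex_of_le_normalizer hM.1.le inf_le_left
    (le_normalizer_inf le_normalizer le_normalizer_of_normal)
  _ = p := hM.relIndex_eq hP.2.1

lemma card_sectionImage_dvd_of_usQuasinormal [IsSimpleGroup X] [Finite X] [Fact p.Prime]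
    [Fact q.Prime] [F.Normal] (hX : ¬ Group.IsSolvable X) (hφ : Function.Surjective φ)
    (hpq : p ≠ q) (hqX : q ∣ Nat.card X)
    (hP : IsSylowIn p P F) (hM : IsMaximalIn M P) (hMs : UsQuasinormal M)
    (hpM : p ∣ (sectionImage φ M).index) : Nat.card (sectionImage φ P) ∣ p := by
  have hMF := hM.1.le.trans hP.1
  obtain ⟨T, hT, hMT, hz⟩ := hMs
  rcases (sectionImage_normal hφ hT).eq_bot_or_eq_top with hTX | hTX
  · have hsup : sectionImage φ (M ⊔ T) = sectionImage φ M := by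
      rw [sectionImage_sup hMF, hTX, sup_bot_eq]
    have hMX := sectionImage_eq_bot_of_commute_sylow hφ Fact.out hpq hqX hMT.commute_sylow
      (hsup ▸ hpM)
    have hdvd := relIndex_sectionImage_dvd φ M P
    rwa [← hsup, hMX, relIndex_bot_left, inf_of_le_left hP.1, hM.relIndex_eq hP.2.1] at hdvd
  · have hcore : Group.IsSolvable M.normalCore :=
      have := ((hP.2.1.to_le hM.1.le).to_le M.normalCore_le).isNilpotent
      inferInstance
    have := UHypercenterMod_isSolvable hcore
    have hMTZ : M ⊓ T ≤ UHypercenterMod M.normalCore := hz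
    refine card_sectionImage_dvd_of_inf_eq_bot hP hM hT hTX (le_bot_iff.1 ?_)
    exact (sectionImage_mono hMTZ).trans_eq
      (sectionImage_eq_bot_of_isSolvable hX hφ UHypercenterMod_normal)

end SimpleSection

section SimpleGroup

open Subgroup

variable {X : Type*} [Group X] [Finite X] {p r : ℕ}

lemma exists_greatest_prime_dvd_card_ne_minFac (hX : ¬ Group.IsSolvable X) :
    ∃ r : ℕ, r.Prime ∧ r ∣ Nat.card X ∧ (∀ s : ℕ, s.Prime → s ∣ Nat.card X → s ≤ r) ∧
      (Nat.card X).minFac ≠ r := by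
  have hne : (Nat.card X).primeFactors.Nonempty := by
    rw [Nat.nonempty_primeFactors]
    refine Nat.one_lt_iff_ne_zero_and_ne_one.2 ⟨Nat.card_pos.ne', fun h => hX ?_⟩
    have := (Nat.card_eq_one_iff_unique.1 h).1
    infer_instance
  set r := (Nat.card X).primeFactors.max' hne
  obtain ⟨hr, hrX, -⟩ := Nat.mem_primeFactors.1 (Finset.max'_mem _ hne)
  have hmax (s : ℕ) (hs : s.Prime) (hsX : s ∣ Nat.card X) : s ≤ r :=
    Finset.le_max' _ s (Nat.mem_primeFactors.2 ⟨hs, hsX, Nat.card_pos.ne'⟩)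
  refine ⟨r, hr, hrX, hmax, fun hmin => hX ?_⟩
  have hpow := Nat.eq_prime_pow_of_unique_prime_dvd (p := r) (Nat.card_pos.ne' : Nat.card X ≠ 0)
    fun {d} hd hdX => (hmax d hd hdX).antisymm (hmin ▸ Nat.minFac_le_of_dvd hd.two_le hdX)
  have := Fact.mk hr
  have := (IsPGroup.of_card hpow).isNilpotent
  infer_instance

variable [IsSimpleGroup X]

lemma sylow_not_normal [Fact r.Prime] (hX : ¬ Group.IsSolvable X) (hr : r ∣ Nat.card X)
    (R : Sylow r X) : ¬ (R : Subgroup X).Normal := by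
  intro hR
  rcases hR.eq_bot_or_eq_top with h | h
  · have := R.not_dvd_index
    rw [h, index_bot] at this
    exact this hr
  · have := ((h ▸ R.2 : IsPGroup r (⊤ : Subgroup X)).of_equiv topEquiv).isNilpotent
    exact hX inferInstance

-- By Burnside's transfer theorem a cyclic Sylow subgroup would have a normal complement.
lemma sylow_minFac_not_isCyclic [Fact p.Prime] (hX : ¬ Group.IsSolvable X)
    (hp : (Nat.card X).minFac = p) (P : Sylow p X) : ¬ IsCyclic P := by
  intro hP
  have hpX : p ∣ Nat.card X := hp ▸ Nat.minFac_dvd _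
  have hcompl := IsCyclic.isComplement' hp hP
  rcases (MonoidHom.normal_ker (MonoidHom.transferSylow P
    (hP.normalizer_le_centralizer hp))).eq_bot_or_eq_top with h | h
  · rw [h, isComplement'_bot_left] at hcompl
    exact sylow_not_normal hX hpX P (hcompl ▸ inferInstance)
  · rw [h, isComplement'_top_left] at hcompl
    exact sylow_not_normal hX hpX P (hcompl ▸ inferInstance)

end SimpleGroup

section LiftMaximal

open Subgroup

variable {G X : Type*} [Group G] [Group X] {P F : Subgroup G} {N : Subgroup X}

lemma map_inf_comap_eq_of_le {f : G →* X} (h : N ≤ P.map f) : (P ⊓ N.comap f).map f = N := by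
  refine (map_le_iff_le_comap.2 inf_le_right).antisymm fun x hx => ?_
  obtain ⟨y, hy, rfl⟩ := h hx
  exact mem_map_of_mem f ⟨hy, hx⟩

lemma IsMaximalIn.inf_comap {f : G →* X} (h : IsMaximalIn N (P.map f)) :
    IsMaximalIn (P ⊓ N.comap f) P := by
  refine ⟨inf_lt_left.2 fun hP => h.1.not_ge (map_le_iff_le_comap.2 hP), fun L hL hLP => ?_⟩
  have hNL : N ≤ L.map f := map_inf_comap_eq_of_le h.1.le ▸ map_mono hL.le
  have hLN : ¬ L.map f ≤ N := fun hLN => hL.not_ge (le_inf hLP (map_le_iff_le_comap.1 hLN))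
  have hLf : L.map f = P.map f := h.2 _ (lt_of_le_not_ge hNL hLN) (map_mono hLP)
  refine hLP.antisymm fun x hx => ?_
  obtain ⟨l, hl, hlx⟩ : f x ∈ L.map f := hLf ▸ mem_map_of_mem f hx
  refine (L.mul_mem_cancel_left (L.inv_mem hl)).1 (hL.le ⟨P.mul_mem (P.inv_mem (hLP hl)) hx, ?_⟩)
  exact mem_comap.2 (by rw [map_mul, map_inv, hlx, inv_mul_cancel]; exact N.one_mem)

lemma IsMaximalIn.map_subtype {M P : Subgroup F} (h : IsMaximalIn M P) :
    IsMaximalIn (M.map F.subtype) (P.map F.subtype) := by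
  refine ⟨(map_lt_map_iff_of_injective F.subtype_injective).2 h.1, fun L hML hLP => ?_⟩
  obtain ⟨L, rfl⟩ := exists_map_subtype_eq (hLP.trans (map_subtype_le P))
  rw [h.2 L ((map_lt_map_iff_of_injective F.subtype_injective).1 hML)
    ((map_le_map_iff_of_injective F.subtype_injective).1 hLP)]

lemma exists_isMaximalIn_sectionImage_eq {φ : F →* X} (hP : P ≤ F)
    (h : IsMaximalIn N (sectionImage φ P)) : ∃ M, IsMaximalIn M P ∧ sectionImage φ M = N := by
  obtain ⟨P, rfl⟩ := exists_map_subtype_eq hP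
  rw [sectionImage_map_subtype] at h
  exact ⟨_, h.inf_comap.map_subtype,
    (sectionImage_map_subtype _).trans (map_inf_comap_eq_of_le h.1.le)⟩

end LiftMaximal

section SimpleQuotient

open Subgroup

variable {Γ : Type*} [Group Γ]

lemma IsChiefFactor.isSimpleGroup_quotient {D : Subgroup Γ} [D.Normal] (h : IsChiefFactor ⊤ D) :
    IsSimpleGroup (Γ ⧸ D) := by
  have : Nontrivial (Γ ⧸ D) := QuotientGroup.nontrivial_iff.2 h.2.2.1.ne
  refine ⟨fun L hL => ?_⟩
  have hsurj := QuotientGroup.mk'_surjective D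
  rcases h.eq_or_eq (hL.comap (QuotientGroup.mk' D)) (QuotientGroup.le_comap_mk' D L) le_top with
    hL | hL
  · left
    rw [← map_comap_eq_self_of_surjective hsurj L, hL, QuotientGroup.map_mk'_self]
  · exact .inr (comap_injective hsurj (hL.trans (comap_top _).symm))

lemma IsQuasinilpotentGroup.exists_isSimpleGroup_quotient [Finite Γ]
    (hΓ : IsQuasinilpotentGroup Γ) (hs : ¬ Group.IsSolvable Γ) :
    ∃ (D : Subgroup Γ) (_ : D.Normal), IsSimpleGroup (Γ ⧸ D) ∧ ¬ Group.IsSolvable (Γ ⧸ D) := by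
  obtain ⟨S, hS⟩ := (Set.toFinite {S : Subgroup Γ | S.Normal ∧ Group.IsSolvable S}).exists_maximal
    ⟨⊥, inferInstance, inferInstance⟩
  obtain ⟨hSn, hSs⟩ := hS.prop
  have hStop : S ≠ ⊤ := by
    rintro rfl
    exact hs (Group.isSolvable_of_surjective (f := (topEquiv (G := Γ)).toMonoidHom)
      topEquiv.surjective)
  obtain ⟨A, -, hA⟩ := exists_isChiefFactor_right inferInstance hSn (lt_top_iff_ne_top.2 hStop)
  have hAn := hA.1
  have hAs : ¬ Group.IsSolvable A := fun h => hA.2.2.1.not_ge (hS.le_of_ge ⟨hAn, h⟩ hA.2.2.1.le)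
  set D := factorCentralizer A S
  have hAD : A ⊔ D = ⊤ := isQuasinilpotentGroup_iff.1 hΓ A S hA
  have hD : D.Normal := normalizer_eq_top_iff.1 (top_le_iff.1
    (le_normalizer_factorCentralizer le_normalizer_of_normal le_normalizer_of_normal))
  have hSD : S ≤ D := (le_factorCentralizer_iff le_normalizer_of_normal).2 (commutator_le_left S A)
  have hinf : A ⊓ D = S := by
    refine (hA.eq_or_eq inferInstance (le_inf hA.2.2.1.le hSD) inf_le_left).resolve_right
      fun h => ?_
    have hAA : ⁅A, A⁆ ≤ S :=
      (le_factorCentralizer_iff le_normalizer_of_normal).1 (inf_eq_left.1 h)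
    refine hAs (isSolvable_of_commutator_le ?_ hA.2.2.1.le hSs)
    rwa [← map_le_map_iff_of_injective A.subtype_injective, map_subtype_commutator,
      map_subgroupOf_eq_of_le hA.2.2.1.le]
  have hchief : IsChiefFactor ⊤ D := by
    simpa only [hAD, sup_eq_right.2 hSD] using (hA.sup hD hinf.le).1
  refine ⟨D, hD, hchief.isSimpleGroup_quotient, fun hsolv => hAs ?_⟩
  refine Group.isSolvable_of_ker_le_range (inclusion hA.2.2.1.le)
    ((QuotientGroup.mk' D).comp A.subtype) fun a ha => ?_
  have haD : (a : Γ) ∈ D := (QuotientGroup.eq_one_iff (a : Γ)).1 ha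
  exact ⟨⟨a, hinf.le ⟨a.2, haD⟩⟩, rfl⟩

end SimpleQuotient

section Solvable

open Subgroup

variable {G X : Type*} [Group G] [Finite G] {F H : Subgroup G} {p : ℕ}

lemma exists_isSylowIn [Fact p.Prime] (F : Subgroup G) : ∃ P, IsSylowIn p P F := by
  obtain ⟨S⟩ : Nonempty (Sylow p F) := inferInstance
  refine ⟨S.map F.subtype, map_subtype_le _, S.2.map _, ?_⟩
  rw [subgroupOf, comap_map_eq_self_of_injective F.subtype_injective]
  exact S.not_dvd_index

/-- Every maximal subgroup of `P` without supersoluble supplement is `𝔘ₛ`-quasinormal, as is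
assumed of the noncyclic Sylow subgroups of `F*(H)`. -/
def HasUsQuasinormalMaximals (P : Subgroup G) : Prop :=
  ∀ M : Subgroup G, IsMaximalIn M P → ¬ HasSupersolubleSupplement M → UsQuasinormal M

lemma isSolvable_of_isSimpleGroup [F.Normal] [Group X] [IsSimpleGroup X] {φ : F →* X}
    (hφ : Function.Surjective φ)
    (hF : ∀ p : ℕ, p.Prime → ∀ P, IsSylowIn p P F → ¬ IsCyclic P → HasUsQuasinormalMaximals P) :
    Group.IsSolvable X := by
  have : Finite X := Finite.of_surjective φ hφ
  by_contra hX
  obtain ⟨r, hr, hrX, hmax, hpr⟩ := exists_greatest_prime_dvd_card_ne_minFac hX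
  obtain ⟨p, hp⟩ : ∃ p, (Nat.card X).minFac = p := ⟨_, rfl⟩
  have : Fact p.Prime := ⟨hp ▸ Nat.minFac_prime Finite.one_lt_card.ne'⟩
  have : Fact r.Prime := ⟨hr⟩
  rw [hp] at hpr
  obtain ⟨P, hP⟩ := exists_isSylowIn (p := p) F
  have hPX : IsPGroup p (sectionImage φ P) := sectionImage_isPGroup hP.2.1
  have hcyc : ¬ IsCyclic (sectionImage φ P) :=
    sylow_minFac_not_isCyclic hX hp (hPX.toSylow (not_dvd_index_sectionImage hφ hP))
  have hPcyc : ¬ IsCyclic P := fun _ => hcyc sectionImage_isCyclic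
  have hbot : sectionImage φ P ≠ ⊥ := fun h => hcyc (h ▸ inferInstance)
  have hsupp (N : Subgroup X) (hN : IsMaximalIn N (sectionImage φ P)) :
      HasSupersolubleSupplement N := by
    obtain ⟨M, hM, rfl⟩ := exists_isMaximalIn_sectionImage_eq hP.1 hN
    by_contra hMs
    have hMp : p ∣ (sectionImage φ M).index :=
      (hN.relIndex_eq hPX).symm.dvd.trans (relIndex_dvd_index_of_le hN.1.le)
    have hcard := card_sectionImage_dvd_of_usQuasinormal hX hφ hpr hrX hP hM
      (hF p Fact.out P hP hPcyc M hM fun h =>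
        hMs (sectionImage_hasSupersolubleSupplement hφ (hM.1.le.trans hP.1) h)) hMp
    exact hcyc (isCyclic_of_card_dvd_prime hcard)
  have := subsingleton_sylow_of_forall_hasSupersolubleSupplement hPX hbot hpr hmax hsupp
  obtain ⟨R⟩ : Nonempty (Sylow r X) := inferInstance
  exact sylow_not_normal hX hrX R R.normal_of_subsingleton

lemma isSolvable_FStarIn [H.Normal] (hH : ∀ p : ℕ, p.Prime → ∀ P, IsSylowIn p P (FStarIn H) →
    ¬ IsCyclic P → HasUsQuasinormalMaximals P) : Group.IsSolvable (FStarIn H) := by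
  by_contra hs
  obtain ⟨D, hD, hsimple, hns⟩ :=
    isQuasinilpotentGroup_FStarIn.exists_isSimpleGroup_quotient hs
  have := FStarIn_normal (H := H)
  exact hns (isSolvable_of_isSimpleGroup (QuotientGroup.mk'_surjective D) hH)

end Solvable

section Nilpotent

open Subgroup

variable {G Γ : Type*} [Group G] [Group Γ] {A B C : Subgroup Γ}

lemma IsChiefFactor.commutator_le [B.Normal] [C.Normal] (h : IsChiefFactor A B)
    (hC : ¬ A.map (QuotientGroup.mk' B) ≤
      ⁅A.map (QuotientGroup.mk' B), C.map (QuotientGroup.mk' B)⁆) : ⁅A, C⁆ ≤ B := by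
  have := h.1
  rcases h.eq_or_eq (L := ⁅A, C⁆ ⊔ B) inferInstance le_sup_right
    (sup_le (commutator_le_left A C) h.2.2.1.le) with hB | hA
  · exact hB ▸ le_sup_left
  · refine (hC ?_).elim
    rw [← map_commutator, map_le_iff_le_comap, comap_map_eq, QuotientGroup.ker_mk', hA]

lemma IsChiefFactor.map_mk'_ne_bot [B.Normal] (h : IsChiefFactor A B) :
    A.map (QuotientGroup.mk' B) ≠ ⊥ := by
  rw [Ne, Subgroup.map_eq_bot_iff, QuotientGroup.ker_mk']
  exact h.2.2.1.not_ge

lemma IsChiefFactor.commutator_self_le [Group.IsSolvable Γ] (h : IsChiefFactor A B) :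
    ⁅A, A⁆ ≤ B :=
  have := h.1
  have := h.2.1
  h.commutator_le (Group.IsSolvable.commutator_lt_of_ne_bot h.map_mk'_ne_bot).not_ge

lemma eq_bot_of_le_commutator_top [Group.IsNilpotent Γ] (h : A ≤ ⁅A, ⊤⁆) : A = ⊥ := by
  obtain ⟨n, hn⟩ := Subgroup.nilpotent_iff_lowerCentralSeries.1 ‹Group.IsNilpotent Γ›
  have le_lowerCentralSeries (n : ℕ) : A ≤ (⊤ : Subgroup Γ).lowerCentralSeries n := by
    induction n with
    | zero => exact le_top
    | succ n ih => exact h.trans (commutator_mono ih le_rfl)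
  exact eq_bot_iff.2 (hn ▸ le_lowerCentralSeries n)

lemma IsChiefFactor.commutator_top_le [Group.IsNilpotent Γ] (h : IsChiefFactor A B) :
    ⁅A, ⊤⁆ ≤ B := by
  have := h.1
  have := h.2.1
  refine h.commutator_le fun hle => h.map_mk'_ne_bot (eq_bot_of_le_commutator_top ?_)
  exact hle.trans (commutator_mono le_rfl le_top)

lemma isQuasinilpotentGroup_of_isNilpotent [Group.IsNilpotent Γ] : IsQuasinilpotentGroup Γ := by
  refine isQuasinilpotentGroup_iff.2 fun A B h => top_le_iff.1 (le_sup_of_le_right ?_)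
  have := h.2.1
  rw [le_factorCentralizer_iff le_normalizer_of_normal, commutator_comm]
  exact h.commutator_top_le

-- A chief factor of a soluble quasinilpotent group is abelian and hence central; applied to a
-- chief factor above the core of a maximal subgroup, this makes the maximal subgroup normal.
lemma IsQuasinilpotentGroup.isNilpotent [Finite Γ] [Group.IsSolvable Γ]
    (hΓ : IsQuasinilpotentGroup Γ) : Group.IsNilpotent Γ := by
  refine ((Group.isNilpotent_of_finite_tfae (G := Γ)).out 0 2).2 fun M hM => ?_
  obtain ⟨A, -, hA⟩ := exists_isChiefFactor_right inferInstance M.normalCore_normal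
    (M.normalCore_le.trans_lt hM.lt_top)
  have hAM : ¬ A ≤ M := fun h =>
    hA.2.2.1.not_ge (have := hA.1; normal_le_normalCore.2 h)
  have htop : A ⊔ M = ⊤ := hM.2 _ (lt_of_le_not_ge le_sup_right fun h => hAM (le_sup_left.trans h))
  have hcentral : ⊤ ≤ factorCentralizer A M.normalCore := by
    rw [← isQuasinilpotentGroup_iff.1 hΓ A _ hA]
    exact sup_le ((le_factorCentralizer_iff le_normalizer_of_normal).2 hA.commutator_self_le) le_rfl
  rw [le_factorCentralizer_iff le_normalizer_of_normal] at hcentral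
  rw [← normalizer_eq_top_iff, ← top_le_iff, ← htop]
  refine sup_le (le_normalizer_iff_commutator_le_right.2 ?_) le_normalizer
  rw [commutator_comm]
  exact (commutator_mono le_top le_rfl).trans (hcentral.trans M.normalCore_le)

lemma isNilpotent_FStarIn [Finite G] {H : Subgroup G} [Group.IsSolvable (FStarIn H)] :
    Group.IsNilpotent (FStarIn H) :=
  isQuasinilpotentGroup_FStarIn.isNilpotent

variable {F : Subgroup G} {p : ℕ}

lemma exists_normal_isSylowIn [Finite G] [F.Normal] [Group.IsNilpotent F] [hp : Fact p.Prime] :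
    ∃ P : Subgroup G, P.Normal ∧ IsSylowIn p P F ∧ ∀ x ∈ F, (∃ k, orderOf x = p ^ k) → x ∈ P := by
  obtain ⟨S⟩ : Nonempty (Sylow p F) := inferInstance
  have sylow_normal := ((Group.isNilpotent_of_finite_tfae (G := F)).out 0 3).1 ‹_›
  have hS : (S : Subgroup F).Normal := sylow_normal p hp S
  have := S.characteristic_of_normal hS
  refine ⟨(S : Subgroup F).map F.subtype, ConjAct.normal_of_characteristic_of_normal,
    ⟨map_subtype_le _, S.2.map _, ?_⟩, fun x hx ⟨k, hk⟩ => ?_⟩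
  · rw [subgroupOf, comap_map_eq_self_of_injective F.subtype_injective]
    exact S.not_dvd_index
  · have hz : IsPGroup p (zpowers (⟨x, hx⟩ : F)) := by
      refine IsPGroup.of_card (n := k) ?_
      rw [Nat.card_zpowers, ← hk, ← orderOf_coe]
    have := S.unique_of_normal hS
    obtain ⟨Q, hQ⟩ := hz.exists_le_sylow
    rw [Subsingleton.elim Q S] at hQ
    exact ⟨⟨x, hx⟩, hQ (mem_zpowers _), rfl⟩

end Nilpotent

section RelIndexPrime

open Subgroup
open scoped commutatorElement

variable {G : Type*} [Group G] {A B P : Subgroup G} {p : ℕ}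

lemma card_map_mk'_eq_relIndex [B.Normal] :
    Nat.card (A.map (QuotientGroup.mk' B)) = B.relIndex A := by
  rw [← relIndex_ker, QuotientGroup.ker_mk']

/-- The action of `G` by conjugation on the factor `A/B`, realized as the image of `A` in
`G ⧸ B`. -/
def conjFactor (A B : Subgroup G) [A.Normal] [B.Normal] :
    G →* MulAut (A.map (QuotientGroup.mk' B)) :=
  have : (A.map (QuotientGroup.mk' B)).Normal := .map ‹_› _ (QuotientGroup.mk'_surjective B)
  MulAut.conjNormal.comp (QuotientGroup.mk' B)

lemma coe_conjFactor_apply [A.Normal] [B.Normal] (g : G) (x : A.map (QuotientGroup.mk' B)) :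
    (conjFactor A B g x : G ⧸ B) = g * x * (g : G ⧸ B)⁻¹ :=
  rfl

lemma conjFactor_apply_eq_self_iff [A.Normal] [B.Normal] {g a : G} (ha : a ∈ A) :
    conjFactor A B g ⟨a, mem_map_of_mem (QuotientGroup.mk' B) ha⟩ =
      ⟨a, mem_map_of_mem (QuotientGroup.mk' B) ha⟩ ↔ ⁅g, a⁆ ∈ B := by
  rw [Subtype.ext_iff, coe_conjFactor_apply, ← QuotientGroup.eq_one_iff]
  exact mul_inv_eq_one.symm

lemma ker_conjFactor [A.Normal] [B.Normal] : (conjFactor A B).ker = factorCentralizer A B := by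
  ext g
  refine ⟨fun hg => ⟨le_normalizer_of_normal (mem_top g), fun a ha => ?_⟩, fun hg => ?_⟩
  · exact (conjFactor_apply_eq_self_iff ha).1 (DFunLike.congr_fun hg _)
  · refine MulEquiv.ext ?_
    rintro ⟨_, a, ha, rfl⟩
    exact (conjFactor_apply_eq_self_iff ha).2 (hg.2 a ha)

variable [hp : Fact p.Prime]

lemma relIndex_eq_of_le_zpowers_sup [B.Normal] {g : G} (hBA : B < A) (hA : A ≤ zpowers g ⊔ B)
    (hg : g ^ p ∈ B) : B.relIndex A = p := by
  refine ((Nat.dvd_prime hp.out).1 ?_).resolve_left (mt relIndex_eq_one.1 hBA.not_ge)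
  have hmap : A.map (QuotientGroup.mk' B) ≤ zpowers (g : G ⧸ B) := by
    rw [← QuotientGroup.mk'_apply, ← MonoidHom.map_zpowers, map_le_iff_le_comap, comap_map_eq,
      QuotientGroup.ker_mk']
    exact hA
  have hcard := card_dvd_of_le hmap
  rw [card_map_mk'_eq_relIndex, Nat.card_zpowers] at hcard
  refine hcard.trans (orderOf_dvd_of_pow_eq_one ?_)
  rw [← QuotientGroup.mk_pow, QuotientGroup.eq_one_iff]
  exact hg

lemma le_normalizer_zpowers_sup [B.Normal] {K : Subgroup G} {x : G}
    (hx : x ∈ factorCentralizer K B) : K ≤ normalizer (zpowers x ⊔ B : Subgroup G) := by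
  have hK : K ≤ factorCentralizer (zpowers x ⊔ B) B :=
    le_factorCentralizer_sup le_normalizer_of_normal le_normalizer_of_normal
      ((le_factorCentralizer_comm le_normalizer_of_normal le_normalizer_of_normal).2
        (zpowers_le.2 hx)) (le_factorCentralizer_self le_normalizer_of_normal)
  rw [le_normalizer_iff_commutator_le_right]
  exact ((le_factorCentralizer_iff le_normalizer_of_normal).1 hK).trans le_sup_right

lemma dvd_relIndex_of_isPGroup [Finite A] (hA : IsPGroup p A) (hBA : B < A) : p ∣ B.relIndex A := by
  obtain ⟨n, hn⟩ := hA.index (B.subgroupOf A)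
  rw [relIndex, hn]
  refine dvd_pow_self p fun h => hBA.not_ge (relIndex_eq_one.1 ?_)
  rw [relIndex, hn, h, pow_zero]

lemma eq_top_of_forall_exists_sylow_le [Finite G]
    (h : ∀ q : ℕ, q.Prime → ∃ Q : Sylow q G, (Q : Subgroup G) ≤ A) : A = ⊤ := by
  rw [← index_eq_one]
  by_contra hne
  obtain ⟨q, hq, hd⟩ := Nat.exists_prime_and_dvd hne
  have : Fact q.Prime := ⟨hq⟩
  obtain ⟨Q, hQ⟩ := h q hq
  exact Q.not_dvd_index (hd.trans (index_dvd_of_le hQ))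

lemma exists_fixed_mod_of_pow_mem_factorCentralizer [Finite G] [A.Normal] [B.Normal]
    {K : Subgroup G} (hAB : p ∣ B.relIndex A)
    (hK : ∀ g ∈ K, ∃ k : ℕ, g ^ p ^ k ∈ factorCentralizer A B) :
    ∃ x ∈ A, x ∉ B ∧ x ∈ factorCentralizer K B := by
  have hp_map : IsPGroup p (K.map (conjFactor A B)) := by
    rintro ⟨_, g, hg, rfl⟩
    obtain ⟨k, hk⟩ := hK g hg
    refine ⟨k, Subtype.ext ?_⟩
    rw [SubmonoidClass.coe_pow, ← map_pow]
    exact ker_conjFactor.ge hk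
  have hcard : p ∣ Nat.card (A.map (QuotientGroup.mk' B)) := by rwa [card_map_mk'_eq_relIndex]
  obtain ⟨⟨_, a, ha, rfl⟩, hfix, hne⟩ :=
    hp_map.exists_fixed_point_of_prime_dvd_card_of_fixed_point (A.map (QuotientGroup.mk' B)) hcard
      (a := 1) fun φ => (φ : MulAut (A.map (QuotientGroup.mk' B))).map_one
  refine ⟨a, ha, fun haB => hne (Subtype.ext ((QuotientGroup.eq_one_iff a).2 haB).symm),
    le_normalizer_of_normal (mem_top a), fun g hg => ?_⟩
  rw [← commutatorElement_inv, inv_mem_iff]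
  exact (conjFactor_apply_eq_self_iff ha).1 (hfix ⟨_, mem_map_of_mem _ hg⟩)

lemma IsSupersoluble.exists_normal_le_zpowers_sup (h : IsSupersoluble G) [A.Normal]
    (hAB : ¬ A ≤ B) :
    ∃ V ≤ A, V.Normal ∧ ¬ V ≤ B ∧ ∃ g ∈ A, V ≤ zpowers g ⊔ B := by
  have first_step : ∀ C : Subgroup G, Relation.ReflTransGen IsCyclicStep ⊥ C → ¬ A ⊓ C ≤ B →
      ∃ V ≤ A, V.Normal ∧ ¬ V ≤ B ∧ ∃ g ∈ A, V ≤ zpowers g ⊔ B := by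
    intro C hC
    induction hC with
    | refl => exact fun h => (h (inf_le_right.trans bot_le)).elim
    | @tail C D _ step ih =>
      intro hD
      by_cases hC : A ⊓ C ≤ B
      swap
      · exact ih hC
      have := step.normal_right
      obtain ⟨g, -, hgD⟩ := (step.comap A.subtype).exists_zpow
      refine ⟨A ⊓ D, inf_le_left, inferInstance, hD, g, g.2, fun x hx => ?_⟩
      obtain ⟨m, hm⟩ := hgD ⟨x, hx.1⟩ hx.2
      have hxg : x⁻¹ * (g : G) ^ m ∈ B := hC ⟨((⟨x, hx.1⟩ : A)⁻¹ * g ^ m).2, hm⟩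
      have := mul_mem_sup (zpow_mem_zpowers (g : G) m) (B.inv_mem hxg)
      simpa using this
  exact first_step ⊤ (isSupersoluble_iff.1 h) (by rwa [inf_top_eq])

lemma IsSupersoluble.exists_le_normalizer_le_zpowers_sup {T : Subgroup G} (hT : IsSupersoluble T)
    (hTA : T ≤ normalizer A) (hAT : ¬ A ⊓ T ≤ B) :
    ∃ V ≤ A, T ≤ normalizer V ∧ ¬ V ≤ B ∧ ∃ g ∈ A, V ≤ zpowers g ⊔ B := by
  have := normal_subgroupOf_of_le_normalizer hTA
  have map_le : (B.subgroupOf T).map T.subtype ≤ B := map_le_iff_le_comap.2 le_rfl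
  obtain ⟨V, hVA, hV, hVB, g, hg, hVg⟩ := hT.exists_normal_le_zpowers_sup
    (A := A.subgroupOf T) (B := B.subgroupOf T) fun h => hAT <|
      (subgroupOf_map_subtype A T).ge.trans ((map_mono h).trans map_le)
  refine ⟨V.map T.subtype, map_le_iff_le_comap.2 hVA, le_normalizer_map_subtype_iff.2 hV,
    fun h => hVB (map_le_iff_le_comap.1 h), g, hg, (map_mono hVg).trans ?_⟩
  rw [Subgroup.map_sup, MonoidHom.map_zpowers]
  exact sup_le_sup_left map_le _

end RelIndexPrime

section Monolith

open Subgroup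
open scoped commutatorElement

variable {G : Type*} [Group G] {A B L M P T : Subgroup G} {p : ℕ}

/-- `A/B` is the unique minimal normal subgroup of `G/B` contained in `P/B`. -/
structure IsMonolith (P A B : Subgroup G) : Prop where
  isChiefFactor : IsChiefFactor A B
  le : A ≤ P
  le_of_lt : ∀ L : Subgroup G, L.Normal → B < L → L ≤ P → A ≤ L

lemma IsMonolith.le_sup (h : IsMonolith P A B) [L.Normal] (hLP : L ≤ P) (hLB : ¬ L ≤ B) :
    A ≤ L ⊔ B := by
  have := h.isChiefFactor.2.1
  exact h.le_of_lt _ (sup_normal L B) (right_lt_sup.2 hLB)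
    (sup_le hLP (h.isChiefFactor.2.2.1.le.trans h.le))

lemma exists_isMonolith_not_prime [Finite G] {F : Subgroup G} (h : IsChiefFactor A B)
    (hF : F ≤ B) (hAP : A ≤ P) (hAB : ¬ (B.relIndex A).Prime) :
    ∃ A B, IsMonolith P A B ∧ F ≤ B ∧ ¬ (B.relIndex A).Prime := by
  obtain ⟨B, ⟨A, h, hF, hAP, hAB⟩, hmax⟩ := (Set.toFinite {B : Subgroup G | ∃ A,
    IsChiefFactor A B ∧ F ≤ B ∧ A ≤ P ∧ ¬ (B.relIndex A).Prime}).exists_maximal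
      ⟨B, A, h, hF, hAP, hAB⟩
  refine ⟨A, B, ⟨h, hAP, fun L hL hBL hLP => ?_⟩, hF, hAB⟩
  have := h.1
  by_contra hAL
  have hinf : A ⊓ L = B := (h.eq_or_eq (normal_inf_normal A L) (le_inf h.2.2.1.le hBL.le)
    inf_le_left).resolve_right fun eq => hAL (eq ▸ inf_le_right)
  obtain ⟨hsup, relIndex_sup⟩ := h.sup hL hinf.le
  rw [sup_eq_right.2 hBL.le] at hsup relIndex_sup
  exact hBL.not_ge (hmax ⟨A ⊔ L, hsup, hF.trans hBL.le, sup_le hAP hLP, relIndex_sup ▸ hAB⟩ hBL.le)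

section Supplement

variable (hMP : M ≤ P) (hMT : (M : Set G) * (T : Set G) = Set.univ)

include hMP hMT

lemma le_of_inf_le_of_mul_eq_univ (h : P ⊓ T ≤ M) : P ≤ M := by
  intro x hx
  obtain ⟨m, hm, t, ht, rfl⟩ : x ∈ (M : Set G) * (T : Set G) := hMT ▸ Set.mem_univ x
  exact mul_mem hm (h ⟨(mul_mem_cancel_left (hMP hm)).1 hx, ht⟩)

lemma normal_of_le_normalizer_of_mul_eq_univ (hP : P ≤ normalizer L) (hT : T ≤ normalizer L) :
    L.Normal := by
  refine normalizer_eq_top_iff.1 (eq_top_iff.2 fun x _ => ?_)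
  obtain ⟨m, hm, t, ht, rfl⟩ : x ∈ (M : Set G) * (T : Set G) := hMT ▸ Set.mem_univ x
  exact mul_mem (hP (hMP hm)) (hT ht)

end Supplement

variable [Finite G] [hp : Fact p.Prime]

-- Since `P` normalizes every subgroup between `Φ(P)` and `P`, and `G = P T`, such a subgroup is
-- normal in `G` as soon as `T` normalizes it; so `A/B` inherits a cyclic factor from `T`.
lemma IsMonolith.relIndex_eq_of_supplement (h : IsMonolith P A B) (hP : IsPGroup p P)
    [P.Normal] (hB : frattiniIn P ≤ B) (hM : IsMaximalIn M P) (hBM : B ≤ M)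
    (hMT : HasSupersolubleSupplement M) : B.relIndex A = p := by
  obtain ⟨T, hT, hMT⟩ := hMT
  have ⟨_, _, hBA, _⟩ := h.isChiefFactor
  have hBP := hBA.le.trans h.le
  have normal_sup {L : Subgroup G} (hLP : L ≤ P) (hLT : T ≤ normalizer L) : (L ⊔ B).Normal :=
    normal_of_le_normalizer_of_mul_eq_univ hM.1.le hMT
      (le_normalizer_of_frattiniIn_le hP (hB.trans le_sup_right) (sup_le hLP hBP))
      (le_normalizer_sup hLT le_normalizer_of_normal)
  have hA : A ≤ (P ⊓ T) ⊔ B := by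
    have := normal_sup (L := P ⊓ T) inf_le_left
      (le_normalizer_inf le_normalizer_of_normal le_normalizer)
    refine h.le_of_lt _ this (right_lt_sup.2 fun hPT => ?_) (sup_le inf_le_left hBP)
    exact hM.1.not_ge (le_of_inf_le_of_mul_eq_univ hM.1.le hMT (hPT.trans hBM))
  have hAT : ¬ A ⊓ T ≤ B := by
    refine fun hAT => hBA.not_ge fun x hx => ?_
    obtain ⟨t, ht, b, hb, rfl⟩ := (mem_sup_of_le_normalizer le_normalizer_of_normal).1 (hA hx)
    exact mul_mem (hAT ⟨(mul_mem_cancel_right (hBA.le hb)).1 hx, ht.2⟩) hb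
  obtain ⟨V, hVA, hTV, hVB, g, hg, hVg⟩ :=
    hT.exists_le_normalizer_le_zpowers_sup le_normalizer_of_normal hAT
  have hVBA : V ⊔ B = A :=
    (h.isChiefFactor.eq_or_eq (normal_sup (hVA.trans h.le) hTV) le_sup_right
      (sup_le hVA hBA.le)).resolve_left fun eq => hVB (eq ▸ le_sup_left)
  exact relIndex_eq_of_le_zpowers_sup hBA (hVBA ▸ sup_le hVg le_sup_right)
    (hB (pow_mem_frattiniIn hP (h.le hg)))

lemma le_normalizer_inf_of_commute [P.Normal] {Q S : Subgroup G} {q : ℕ} (hq : q.Prime)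
    (hqp : q ≠ p) (hQ : IsPGroup q Q) (hP : IsPGroup p P)
    (h : Commute (S : Set G) (Q : Set G)) : Q ≤ normalizer (S ⊓ P : Subgroup G) := by
  have hSQ : (S ⊔ Q) ⊓ P ≤ S := by
    obtain ⟨k, hk⟩ := relIndex_inf_eq_prime_pow (F := P) hq h hQ le_sup_left le_rfl
    obtain ⟨n, hn⟩ := IsPGroup.iff_card.1 hP
    have hdvd := (relIndex_dvd_card S ((S ⊔ Q) ⊓ P)).trans (card_dvd_of_le inf_le_right)
    rw [hk, hn] at hdvd
    have hcop : Nat.Coprime (q ^ k) (p ^ n) := .pow _ _ ((Nat.coprime_primes hq hp.out).2 hqp)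
    rw [← relIndex_eq_one, hk]
    exact Nat.eq_one_of_dvd_coprimes hcop dvd_rfl hdvd
  refine le_normalizer_iff.2 fun g hg x hx => ?_
  have hgx : g * x * g⁻¹ ∈ (S ⊔ Q) ⊓ P :=
    ⟨mul_mem (mul_mem (mem_sup_right hg) (mem_sup_left hx.1))
        ((S ⊔ Q).inv_mem (mem_sup_right hg)),
      Normal.conj_mem ‹_› x hx.2 g⟩
  exact ⟨hSQ hgx, hgx.2⟩

lemma IsMonolith.inf_UHypercenterMod_normalCore_le [P.Normal] (h : IsMonolith P A B)
    (hAB : ¬ (B.relIndex A).Prime) (hMP : M ≤ P) (hBM : B ≤ M) (hAM : ¬ A ≤ M) :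
    P ⊓ UHypercenterMod M.normalCore ≤ B := by
  have := h.isChiefFactor.2.1
  have := UHypercenterMod_normal (K := M.normalCore)
  have hBcore : B ≤ M.normalCore := normal_le_normalCore.2 hBM
  have hcore : M.normalCore ≤ B := by
    by_contra hle
    exact hAM ((h.le_sup (M.normalCore_le.trans hMP) hle).trans (sup_le M.normalCore_le hBM))
  by_contra hle
  refine hAB (h.isChiefFactor.prime_relIndex_of_le_UHypercenterMod hcore ?_)
  exact (h.le_sup inf_le_left hle).trans
    (sup_le inf_le_right (hBcore.trans (le_UHypercenterMod _)))

lemma IsMonolith.inf_le_of_inf_le [P.Normal] [T.Normal] (h : IsMonolith P A B)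
    (hAB : ¬ (B.relIndex A).Prime) (hP : IsPGroup p P) (hM : IsMaximalIn M P) (hBM : B ≤ M)
    (hMT : M ⊓ T ≤ B) : P ⊓ T ≤ B := by
  have ⟨_, _, hBA, _⟩ := h.isChiefFactor
  by_contra hle
  have hMA : M ⊓ A ≤ B := by
    rintro x ⟨hxM, hxA⟩
    obtain ⟨t, ht, b, hb, rfl⟩ :=
      (mem_sup_of_le_normalizer le_normalizer_of_normal).1 (h.le_sup inf_le_left hle hxA)
    exact mul_mem (hMT ⟨(mul_mem_cancel_right (hBM hb)).1 hxM, ht.2⟩) hb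
  have hrel : B.relIndex A ∣ p := by
    rw [← hM.relIndex_eq hP, ← le_antisymm hMA (le_inf hBM hBA.le), inf_relIndex_right]
    exact relIndex_dvd_relIndex_of_le_normalizer hM.1.le h.le le_normalizer_of_normal
  refine hAB (((Nat.dvd_prime hp.out).1 hrel).resolve_left ?_ ▸ hp.out)
  exact mt relIndex_eq_one.1 hBA.not_ge

lemma IsMonolith.sylow_le_normalizer_of_usQuasinormal [P.Normal] (h : IsMonolith P A B)
    (hAB : ¬ (B.relIndex A).Prime) (hP : IsPGroup p P) (hM : IsMaximalIn M P) (hBM : B ≤ M)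
    (hAM : ¬ A ≤ M) (hU : UsQuasinormal M) {q : ℕ} [hq : Fact q.Prime] (hqp : q ≠ p)
    (Q : Sylow q G) : (Q : Subgroup G) ≤ normalizer M := by
  obtain ⟨T, hT, hMT, hU⟩ := hU
  have hMTB : M ⊓ T ≤ B := fun x hx =>
    h.inf_UHypercenterMod_normalCore_le hAB hM.1.le hBM hAM ⟨hM.1.le hx.1, hU x hx⟩
  have hPT : P ⊓ T ≤ B := h.inf_le_of_inf_le hAB hP hM hBM hMTB
  have hM_eq : (M ⊔ T) ⊓ P = M := by
    refine le_antisymm ?_ (le_inf le_sup_left hM.1.le)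
    refine (sup_inf_le_of_le_normalizer le_normalizer_of_normal hM.1.le).trans ?_
    exact sup_le le_rfl ((inf_comm T P).trans_le (hPT.trans hBM))
  rw [← hM_eq]
  exact le_normalizer_inf_of_commute hq.out hqp Q.2 hP (hMT.commute_sylow Q)

lemma IsMonolith.sylow_le_normalizer [P.Normal] (h : IsMonolith P A B)
    (hAB : ¬ (B.relIndex A).Prime) (hP : IsPGroup p P) (hmax : HasUsQuasinormalMaximals P)
    (hB : frattiniIn P ≤ B) (hBL : B ≤ L) (hLA : L ≤ A)
    {q : ℕ} [Fact q.Prime] (hqp : q ≠ p) (Q : Sylow q G) : (Q : Subgroup G) ≤ normalizer L := by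
  have := h.isChiefFactor.1
  refine le_normalizer_iff.2 fun g hg x hx => ?_
  have hgxA : g * x * g⁻¹ ∈ A := Normal.conj_mem ‹_› x (hLA hx) g
  by_contra hgxL
  obtain ⟨M, hM, hLM, hgxM⟩ :=
    exists_isMaximalIn_notMem hP (hB.trans hBL) (hLA.trans h.le) (h.le hgxA) hgxL
  have hBM := hBL.trans hLM
  have hU : UsQuasinormal M := hmax M hM fun hMT =>
    hAB (h.relIndex_eq_of_supplement hP hB hM hBM hMT ▸ hp.out)
  have hQM := h.sylow_le_normalizer_of_usQuasinormal hAB hP hM hBM (fun hAM => hgxM (hAM hgxA))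
    hU hqp Q
  exact hgxM (le_normalizer_iff.1 hQM g hg x (hLM hx))

-- A point of `A/B` fixed by a Sylow `p`-subgroup spans a subgroup normalized by all Sylow
-- subgroups, so it spans `A/B`.
lemma IsMonolith.prime_relIndex [P.Normal] (h : IsMonolith P A B) (hP : IsPGroup p P)
    (hmax : HasUsQuasinormalMaximals P) (hB : frattiniIn P ≤ B) : (B.relIndex A).Prime := by
  by_contra hAB
  have ⟨_, _, hBA, _⟩ := h.isChiefFactor
  have S : Sylow p G := default
  obtain ⟨x, hxA, hxB, hSx⟩ := exists_fixed_mod_of_pow_mem_factorCentralizer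
    (K := (S : Subgroup G)) (dvd_relIndex_of_isPGroup (hP.to_le h.le) hBA) fun g hg => by
      obtain ⟨k, hk⟩ := S.2 ⟨g, hg⟩
      have hgk : g ^ p ^ k = 1 := congrArg Subtype.val hk
      exact ⟨k, hgk ▸ one_mem _⟩
  have hLA : zpowers x ⊔ B ≤ A := sup_le (zpowers_le.2 hxA) hBA.le
  have hxL : x ∈ zpowers x ⊔ B := mem_sup_left (mem_zpowers x)
  have hL : (zpowers x ⊔ B).Normal := by
    refine normalizer_eq_top_iff.1 (eq_top_of_forall_exists_sylow_le fun q hq => ?_)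
    obtain rfl | hqp := eq_or_ne q p
    · exact ⟨S, le_normalizer_zpowers_sup hSx⟩
    · have := Fact.mk hq
      exact ⟨default, h.sylow_le_normalizer hAB hP hmax hB le_sup_right hLA hqp _⟩
  have hLA_eq : zpowers x ⊔ B = A :=
    (h.isChiefFactor.eq_or_eq hL le_sup_right hLA).resolve_left fun eq => hxB (eq ▸ hxL)
  exact hAB (relIndex_eq_of_le_zpowers_sup hBA hLA_eq.ge
    (hB (pow_mem_frattiniIn hP (h.le hxA))) ▸ hp.out)

/-- Every chief factor of `G` between the Frattini subgroup of `P` and `P` has prime order. -/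
def HasPrimeFrattiniFactors (P : Subgroup G) : Prop :=
  ∀ A B : Subgroup G, IsChiefFactor A B → frattiniIn P ≤ B → A ≤ P → (B.relIndex A).Prime

theorem hasPrimeFrattiniFactors_of_hasUsQuasinormalMaximals [P.Normal] (hP : IsPGroup p P)
    (hmax : ¬ IsCyclic P → HasUsQuasinormalMaximals P) : HasPrimeFrattiniFactors P := by
  intro A B h hB hAP
  by_cases hcyc : IsCyclic P
  · have ⟨_, _, hBA, _⟩ := h
    obtain ⟨g, rfl⟩ := A.isCyclic_iff_exists_zpowers_eq_top.1 (isCyclic_of_le hAP)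
    exact relIndex_eq_of_le_zpowers_sup hBA le_sup_left
      (hB (pow_mem_frattiniIn hP (hAP (mem_zpowers g)))) ▸ hp.out
  by_contra hAB
  obtain ⟨A, B, h, hB, hAB⟩ := exists_isMonolith_not_prime h hB hAP hAB
  exact hAB (h.prime_relIndex hP (hmax hcyc) hB)

end Monolith

section Irreducible

variable {N : Type*} [CommGroup N] [Finite N] [Nontrivial N] {p : ℕ} [hp : Fact p.Prime]

lemma exists_eigenvector_of_iterate_eq_self {V : Type*} [AddCommGroup V] [Module (ZMod p) V]
    [Finite V] [Nontrivial V] {f : V →ₗ[ZMod p] V} (hf : f^[p] = f) :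
    ∃ μ, ∃ v, Module.End.HasEigenvector f μ v := by
  have aeval_eq_zero :
      Polynomial.aeval f (Polynomial.X ^ p - Polynomial.X : Polynomial (ZMod p)) = 0 := by
    have hpow : f ^ p = f := DFunLike.coe_injective ((Module.End.coe_pow f p).trans hf)
    rw [map_sub, map_pow, Polynomial.aeval_X, hpow, sub_self]
  have splits : (minpoly (ZMod p) f).Splits :=
    (GaloisField.splits_zmod_X_pow_sub_X p).of_dvd
      (FiniteField.X_pow_card_sub_X_ne_zero _ hp.out.one_lt) (minpoly.dvd _ f aeval_eq_zero)
  obtain ⟨μ, hμ⟩ := splits.exists_eval_eq_zero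
    (minpoly.degree_pos (Algebra.IsIntegral.isIntegral f)).ne'
  exact ⟨μ, (Module.End.hasEigenvalue_of_isRoot hμ).exists_hasEigenvector⟩

lemma exists_apply_eq_nsmul_of_iterate_eq_self {V : Type*} [AddCommGroup V] [Finite V]
    [Nontrivial V] (hV : ∀ v : V, p • v = 0) {f : V →+ V} (hf : f^[p] = f) :
    ∃ m : ℕ, ∃ v ≠ 0, f v = m • v := by
  let _ : Module (ZMod p) V := AddCommGroup.zmodModule hV
  obtain ⟨μ, v, hv⟩ := exists_eigenvector_of_iterate_eq_self (f := f.toZModLinearMap p) hf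
  refine ⟨μ.val, v, hv.2, ?_⟩
  rw [← Nat.cast_smul_eq_nsmul (ZMod p), ZMod.natCast_zmod_val]
  exact hv.apply_eq_smul

lemma exists_apply_eq_pow_of_pow_eq_self (hN : ∀ x : N, x ^ p = 1) {σ : MulAut N}
    (hσ : σ ^ p = σ) : ∃ m : ℕ, ∃ x ≠ 1, σ x = x ^ m := by
  have iterate_eq (k : ℕ) : σ^[k] = ⇑(σ ^ k) := by
    induction k with
    | zero => rfl
    | succ k ih => rw [Function.iterate_succ, ih, pow_succ, MulAut.coe_mul]
  exact exists_apply_eq_nsmul_of_iterate_eq_self (V := Additive N) hN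
    (f := MonoidHom.toAdditive σ.toMonoidHom) ((iterate_eq p).trans (congrArg DFunLike.coe hσ))

-- The elements on which `σ ∈ S` agrees with one of its eigenvalues form an invariant subgroup, so
-- `σ` is a power map; hence every cyclic subgroup is invariant.
lemma card_eq_prime_of_irreducible (hN : ∀ x : N, x ^ p = 1) {S : Set (MulAut N)}
    (hcomm : ∀ σ ∈ S, ∀ τ ∈ S, Commute σ τ) (hpow : ∀ σ ∈ S, σ ^ p = σ)
    (hirr : ∀ E : Subgroup N, (∀ σ ∈ S, ∀ x ∈ E, σ x ∈ E) → E = ⊥ ∨ E = ⊤) : Nat.card N = p := by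
  have exists_pow (σ) (hσ : σ ∈ S) : ∃ m : ℕ, ∀ x, σ x = x ^ m := by
    obtain ⟨m, x, hx, hσx⟩ := exists_apply_eq_pow_of_pow_eq_self hN (hpow σ hσ)
    let E : Subgroup N := σ.toMonoidHom.eqLocus (powMonoidHom m)
    have mem_E {y : N} : y ∈ E ↔ σ y = y ^ m := Iff.rfl
    have hE : E = ⊤ := by
      refine (hirr E fun τ hτ y hy => ?_).resolve_left ?_
      · rw [mem_E, ← MulAut.mul_apply, hcomm σ hσ τ hτ, MulAut.mul_apply, mem_E.1 hy, map_pow]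
      · exact fun hE => hx (Subgroup.mem_bot.1 (hE ▸ mem_E.2 hσx))
    exact ⟨m, fun y => mem_E.1 (hE ▸ Subgroup.mem_top y)⟩
  obtain ⟨x, hx⟩ := exists_ne (1 : N)
  have hx_top : Subgroup.zpowers x = ⊤ := by
    refine (hirr _ fun σ hσ y hy => ?_).resolve_left (mt Subgroup.zpowers_eq_bot.1 hx)
    obtain ⟨m, hm⟩ := exists_pow σ hσ
    exact hm y ▸ pow_mem hy m
  rw [← Nat.card_congr Subgroup.topEquiv.toEquiv, ← hx_top, Nat.card_zpowers]
  exact orderOf_eq_prime (hN x) hx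

end Irreducible

section PrimeChiefFactor

open Subgroup
open scoped commutatorElement

variable {G : Type*} [Group G] {A B K P : Subgroup G} {p : ℕ}

lemma IsChiefFactor.eq_bot_or_eq_top [A.Normal] [B.Normal] (h : IsChiefFactor A B)
    {E : Subgroup (A.map (QuotientGroup.mk' B))}
    (hE : ∀ g, ∀ x ∈ E, conjFactor A B g x ∈ E) : E = ⊥ ∨ E = ⊤ := by
  obtain ⟨E', hE'⟩ : ∃ E', E' = E.map (Subgroup.subtype _) := ⟨_, rfl⟩
  have le_map : E' ≤ A.map (QuotientGroup.mk' B) := hE' ▸ map_subtype_le E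
  have normal : E'.Normal := by
    refine hE' ▸ ⟨?_⟩
    rintro _ ⟨x, hx, rfl⟩ g
    obtain ⟨g, rfl⟩ := QuotientGroup.mk_surjective g
    exact ⟨conjFactor A B g x, hE g x hx, rfl⟩
  have le_comap : B ≤ E'.comap (QuotientGroup.mk' B) := fun b hb => by
    rw [mem_comap, QuotientGroup.mk'_apply, (QuotientGroup.eq_one_iff b).2 hb]
    exact one_mem _
  have comap_le : E'.comap (QuotientGroup.mk' B) ≤ A := by
    refine (comap_mono le_map).trans ?_
    rw [comap_map_eq, QuotientGroup.ker_mk', sup_eq_left.2 h.2.2.1.le]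
  have map_comap : (E'.comap (QuotientGroup.mk' B)).map (QuotientGroup.mk' B) = E' :=
    map_comap_eq_self_of_surjective (QuotientGroup.mk'_surjective B) _
  rcases h.eq_or_eq (normal.comap _) le_comap comap_le with eq | eq <;> rw [eq, hE'] at map_comap
  · left
    rw [← map_eq_bot_iff_of_injective E (subtype_injective _), ← map_comap]
    exact (Subgroup.map_eq_bot_iff _).2 (QuotientGroup.ker_mk' B).ge
  · right
    rw [← map_injective (subtype_injective _) |>.eq_iff, ← map_comap, ← MonoidHom.range_eq_map,
      range_subtype]

lemma commutator_le_factorCentralizer [A.Normal] [B.Normal] (h : (B.relIndex A).Prime) :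
    commutator G ≤ factorCentralizer A B := by
  rw [← card_map_mk'_eq_relIndex] at h
  have := Fact.mk h
  have := isCyclic_of_prime_card (α := A.map (QuotientGroup.mk' B)) rfl
  let e := IsCyclic.mulAutMulEquiv (A.map (QuotientGroup.mk' B))
  rw [← ker_conjFactor, ← MonoidHom.ker_mulEquiv_comp (conjFactor A B) e]
  exact Abelianization.commutator_subset_ker _

lemma pow_relIndex_sub_one_mem_factorCentralizer [A.Normal] [B.Normal]
    (h : (B.relIndex A).Prime) (g : G) : g ^ (B.relIndex A - 1) ∈ factorCentralizer A B := by
  rw [← card_map_mk'_eq_relIndex] at h ⊢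
  have := Fact.mk h
  have := isCyclic_of_prime_card (α := A.map (QuotientGroup.mk' B)) rfl
  let e := IsCyclic.mulAutMulEquiv (A.map (QuotientGroup.mk' B))
  rw [← ker_conjFactor, MonoidHom.mem_ker, map_pow, ← e.map_eq_one_iff, map_pow]
  exact ZMod.units_pow_card_sub_one_eq_one _ _

variable [hp : Fact p.Prime]

lemma IsChiefFactor.frattiniIn_le [Finite A] (h : IsChiefFactor A B) : frattiniIn A ≤ B := by
  have ⟨_, _, hBA, _⟩ := h
  have := frattiniIn_normal (P := A)
  have hsup := h.eq_or_eq (L := B ⊔ frattiniIn A) inferInstance le_sup_left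
    (sup_le hBA.le (_root_.frattiniIn_le A))
  refine le_sup_right.trans (hsup.resolve_right fun hA => ?_).le
  exact hBA.ne (eq_of_le_sup_frattiniIn hBA.le hA.ge)

lemma IsChiefFactor.relIndex_eq_prime [Finite G] (h : IsChiefFactor A B) (hA : IsPGroup p A)
    (hcomm : commutator G ≤ factorCentralizer A B)
    (hpow : ∀ g : G, g ^ (p - 1) ∈ factorCentralizer A B) : B.relIndex A = p := by
  have ⟨_, _, hBA, _⟩ := h
  rw [← ker_conjFactor] at hcomm hpow
  let _ : CommGroup (A.map (QuotientGroup.mk' B)) :=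
    { mul_comm := by
        rintro ⟨_, a, ha, rfl⟩ ⟨_, b, hb, rfl⟩
        refine Subtype.ext (commutatorElement_eq_one_iff_mul_comm.1 ?_)
        exact (QuotientGroup.eq_one_iff ⁅a, b⁆).2 (h.frattiniIn_le
          (commutator_le_frattiniIn hA (commutator_mem_commutator ha hb))) }
  have : Nontrivial (A.map (QuotientGroup.mk' B)) :=
    (nontrivial_iff_ne_bot _).2 h.map_mk'_ne_bot
  rw [← card_map_mk'_eq_relIndex]
  refine card_eq_prime_of_irreducible (S := Set.range (conjFactor A B)) ?_ ?_ ?_ fun E hE =>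
    h.eq_bot_or_eq_top fun g => hE _ ⟨g, rfl⟩
  · rintro ⟨_, a, ha, rfl⟩
    exact Subtype.ext ((QuotientGroup.eq_one_iff (a ^ p)).2
      (h.frattiniIn_le (pow_mem_frattiniIn hA ha)))
  · rintro _ ⟨g, rfl⟩ _ ⟨k, rfl⟩
    refine commutatorElement_eq_one_iff_commute.1 ?_
    rw [← map_commutatorElement]
    exact hcomm (commutator_mem_commutator (mem_top g) (mem_top k))
  · rintro _ ⟨g, rfl⟩
    rw [← map_pow, ← Nat.sub_add_cancel hp.out.one_le, pow_succ, map_mul,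
      MonoidHom.mem_ker.1 (hpow g), one_mul]

lemma IsChiefFactor.le_factorCentralizer_of_pow_mem [Finite G] [K.Normal] (h : IsChiefFactor A B)
    (hAB : p ∣ B.relIndex A) (hK : ∀ g ∈ K, ∃ k : ℕ, g ^ p ^ k ∈ factorCentralizer A B) :
    K ≤ factorCentralizer A B := by
  have ⟨_, _, hBA, _⟩ := h
  obtain ⟨x, hxA, hxB, hx⟩ := exists_fixed_mod_of_pow_mem_factorCentralizer hAB hK
  have normal : (factorCentralizer K B).Normal := normalizer_eq_top_iff.1 <| top_le_iff.1 <|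
    le_normalizer_factorCentralizer le_normalizer_of_normal le_normalizer_of_normal
  have le_fixed : B ≤ factorCentralizer K B :=
    (le_factorCentralizer_comm le_normalizer_of_normal le_normalizer_of_normal).1
      (le_factorCentralizer_self le_normalizer_of_normal)
  have fixed_eq : A ⊓ factorCentralizer K B = A :=
    (h.eq_or_eq inferInstance (le_inf hBA.le le_fixed) inf_le_left).resolve_left
      fun eq => hxB (eq ▸ ⟨hxA, hx⟩)
  exact (le_factorCentralizer_comm le_normalizer_of_normal le_normalizer_of_normal).1
    (inf_eq_left.1 fixed_eq)

end PrimeChiefFactor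

section ChiefCentralizer

open Subgroup
open scoped commutatorElement

variable {G : Type*} [Group G] {A B D K L P : Subgroup G} {p q : ℕ}

/-- The intersection of the centralizers of the chief factors of `G` between `L` and `P`. -/
def chiefCentralizer (P L : Subgroup G) : Subgroup G :=
  ⨅ (A) (B) (_ : IsChiefFactor A B ∧ L ≤ B ∧ A ≤ P), factorCentralizer A B

lemma le_chiefCentralizer_iff : K ≤ chiefCentralizer P L ↔
    ∀ A B, IsChiefFactor A B → L ≤ B → A ≤ P → K ≤ factorCentralizer A B := by
  simp only [chiefCentralizer, le_iInf_iff, and_imp]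

lemma chiefCentralizer_normal : (chiefCentralizer P L).Normal :=
  normal_iInf_normal fun _ => normal_iInf_normal fun _ => normal_iInf_normal fun ⟨h, _⟩ =>
    have := h.1
    have := h.2.1
    normalizer_eq_top_iff.1 <| top_le_iff.1 <|
      le_normalizer_factorCentralizer le_normalizer_of_normal le_normalizer_of_normal

-- `K` acts by conjugation on each coset of `D` in `B`, and has a fixed point there.
lemma le_inf_centralizer_sup [hD : D.Normal] (hK : IsPGroup q K) (hKB : K ≤ factorCentralizer B D)
    (hDB : D ≤ B) [hq : Fact q.Prime] (hqD : ¬ q ∣ Nat.card D) :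
    B ≤ (B ⊓ centralizer K) ⊔ D := by
  intro b hb
  let coset : SubMulAction (K.map MulAut.conj) G :=
    { carrier := b • (D : Set G)
      smul_mem' := by
        rintro ⟨_, k, hk, rfl⟩ _ ⟨d, hd, rfl⟩
        have conj_mem := D.mul_mem (hD.conj_mem' _ ((hKB hk).2 b hb) b) (hD.conj_mem d hd k)
        refine ⟨_, conj_mem, ?_⟩
        simp only [smul_eq_mul, commutatorElement_def, Subgroup.smul_def, MulAut.smul_def,
          MulAut.conj_apply]
        group }
  have hcard : Nat.card coset = Nat.card D := Nat.card_image_of_injective (mul_right_injective b) _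
  obtain ⟨⟨_, d, hd, rfl⟩, hfix⟩ :=
    (hK.map MulAut.conj).nonempty_fixed_point_of_prime_not_dvd_card coset (hcard ▸ hqD)
  have mem_centralizer : b * d ∈ centralizer (K : Set G) := mem_centralizer_iff.2 fun k hk =>
    mul_inv_eq_iff_eq_mul.1 (congrArg Subtype.val (hfix ⟨_, mem_map_of_mem MulAut.conj hk⟩))
  have hbd : b * d ∈ B ⊓ centralizer (K : Set G) := ⟨mul_mem hb (hDB hd), mem_centralizer⟩
  simpa only [mul_inv_cancel_right] using mul_mem_sup hbd (inv_mem hd)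

lemma le_inf_centralizer_sup_of_le_chiefCentralizer [Finite G] [P.Normal] [hL : L.Normal]
    (hLP : L ≤ P) (hK : IsPGroup q K) (hKP : K ≤ chiefCentralizer P L) [Fact q.Prime]
    (hqP : ¬ q ∣ Nat.card P) : P ≤ (P ⊓ centralizer K) ⊔ L := by
  obtain ⟨B, ⟨hB, hLB, hBP, hPB⟩, hmin⟩ := (Set.toFinite {B : Subgroup G |
    B.Normal ∧ L ≤ B ∧ B ≤ P ∧ P ≤ (P ⊓ centralizer K) ⊔ B}).exists_minimal
      ⟨P, ‹_›, hLP, le_rfl, le_sup_right⟩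
  rcases hLB.eq_or_lt with rfl | hlt
  · exact hPB
  obtain ⟨D, hLD, h⟩ := exists_isChiefFactor_left hB hL hlt
  have ⟨_, hD, hDB, _⟩ := h
  have hBD : B ≤ (B ⊓ centralizer K) ⊔ D :=
    le_inf_centralizer_sup hK (le_chiefCentralizer_iff.1 hKP B D h hLD hBP) hDB.le
      (mt (fun hd => hd.trans (card_dvd_of_le (hDB.le.trans hBP))) hqP)
  refine absurd (hmin ⟨hD, hLD, hDB.le.trans hBP, ?_⟩ hDB.le) hDB.not_ge
  calc P ≤ (P ⊓ centralizer K) ⊔ B := hPB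
    _ ≤ (P ⊓ centralizer K) ⊔ ((B ⊓ centralizer K) ⊔ D) := sup_le_sup_left hBD _
    _ ≤ (P ⊓ centralizer K) ⊔ D :=
      sup_le le_sup_left (sup_le_sup_right (inf_le_inf_right _ hBP) D)

lemma le_centralizer_of_le_chiefCentralizer [Finite G] [P.Normal]
    (hcard : (Nat.card K).Coprime (Nat.card P)) (hKP : K ≤ chiefCentralizer P (frattiniIn P)) :
    K ≤ centralizer P := by
  have := frattiniIn_normal (P := P)
  refine le_of_forall_orderOf_eq_prime_pow fun q hq z hz ⟨k, hk⟩ => ?_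
  have := Fact.mk hq
  obtain rfl | hk0 := eq_or_ne k 0
  · rw [pow_zero, orderOf_eq_one_iff] at hk
    exact hk ▸ one_mem _
  have hqK : q ∣ Nat.card K := (dvd_pow_self q hk0).trans (hk ▸ orderOf_dvd_natCard K hz)
  have hzp : IsPGroup q (zpowers z) := .of_card ((Nat.card_zpowers z).trans hk)
  have hsup := le_inf_centralizer_sup_of_le_chiefCentralizer (frattiniIn_le P) hzp
    ((zpowers_le.2 hz).trans hKP) fun hqP => hq.ne_one (Nat.eq_one_of_dvd_coprimes hcard hqK hqP)
  have hP := eq_of_le_sup_frattiniIn inf_le_left hsup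
  exact le_centralizer_iff.1 (inf_eq_left.1 hP) (mem_zpowers z)

lemma exists_coprime_orderOf_pow [Finite G] (hq : q.Prime) (x : G) :
    ∃ a, (orderOf (x ^ q ^ a)).Coprime q := by
  obtain ⟨a, m, hm, hx⟩ := Nat.exists_eq_pow_mul_and_not_dvd (orderOf_pos x).ne' q hq.ne_one
  refine ⟨a, ?_⟩
  rw [orderOf_pow_of_dvd (pow_ne_zero _ hq.ne_zero) (hx ▸ Dvd.intro _ rfl), hx,
    Nat.mul_div_cancel_left _ (pow_pos hq.pos _)]
  exact ((Nat.Prime.coprime_iff_not_dvd hq).2 hm).symm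

lemma HasPrimeFrattiniFactors.commutator_le (hP : HasPrimeFrattiniFactors P) :
    commutator G ≤ chiefCentralizer P (frattiniIn P) :=
  le_chiefCentralizer_iff.2 fun A B h hB hA =>
    have := h.1
    have := h.2.1
    commutator_le_factorCentralizer (hP A B h hB hA)

variable [hp : Fact p.Prime]

lemma HasPrimeFrattiniFactors.pow_sub_one_mem [Finite G] (hP : HasPrimeFrattiniFactors P)
    (hPp : IsPGroup p P) (g : G) : g ^ (p - 1) ∈ chiefCentralizer P (frattiniIn P) := by
  refine zpowers_le.1 (le_chiefCentralizer_iff.2 fun A B h hB hA => zpowers_le.2 ?_)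
  have ⟨_, _, hBA, _⟩ := h
  have hAB := hP A B h hB hA
  rw [(Nat.prime_dvd_prime_iff_eq hp.out hAB).1 (dvd_relIndex_of_isPGroup (hPp.to_le hA) hBA)]
  exact pow_relIndex_sub_one_mem_factorCentralizer hAB g

lemma HasPrimeFrattiniFactors.relIndex_eq_prime [Finite G] [P.Normal]
    (hP : HasPrimeFrattiniFactors P) (hPp : IsPGroup p P) (h : IsChiefFactor A B) (hAP : A ≤ P) :
    B.relIndex A = p := by
  have ⟨_, _, hBA, _⟩ := h
  have := chiefCentralizer_normal (P := P) (L := frattiniIn P)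
  have hA := hPp.to_le hAP
  have centralizes : chiefCentralizer P (frattiniIn P) ≤ factorCentralizer A B := by
    refine h.le_factorCentralizer_of_pow_mem (dvd_relIndex_of_isPGroup hA hBA) fun g hg => ?_
    obtain ⟨k, hk⟩ := exists_coprime_orderOf_pow hp.out g
    obtain ⟨n, hn⟩ := hPp.exists_card_eq
    have hcard : (Nat.card (zpowers (g ^ p ^ k))).Coprime (Nat.card P) := by
      rw [Nat.card_zpowers, hn]
      exact hk.pow_right n
    have hgP := le_centralizer_of_le_chiefCentralizer hcard (zpowers_le.2 (pow_mem hg (p ^ k)))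
    refine ⟨k, zpowers_le.1 ((le_factorCentralizer_iff le_normalizer_of_normal).2 ?_)⟩
    exact (commutator_mono hgP hAP).trans ((commutator_comm _ _).trans_le
      ((commutator_eq_bot_iff_le_centralizer.2 (le_centralizer_iff.1 le_rfl)).le.trans bot_le))
  exact h.relIndex_eq_prime hA (hP.commutator_le.trans centralizes)
    fun g => centralizes (hP.pow_sub_one_mem hPp g)

end ChiefCentralizer

section SupersolubleExtension

open Subgroup
open scoped commutatorElement

variable {G : Type*} [Group G] {A B E F H M N : Subgroup G} {q : ℕ}

lemma centralizer_setOf_coprime_normal [hF : F.Normal] :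
    (centralizer {f | f ∈ F ∧ (orderOf f).Coprime q}).Normal := by
  refine ⟨fun n hn g => mem_centralizer_iff.2 fun f ⟨hf, hfq⟩ => ?_⟩
  have hconj : g⁻¹ * f * g ∈ {f | f ∈ F ∧ (orderOf f).Coprime q} := by
    refine ⟨hF.conj_mem' f hf g, ?_⟩
    have : orderOf (g⁻¹ * f * g) = orderOf f := by
      simpa only [MulAut.conj_apply, inv_inv] using (MulAut.conj g⁻¹).orderOf_eq f
    rwa [this]
  calc f * (g * n * g⁻¹) = g * ((g⁻¹ * f * g) * n) * g⁻¹ := by group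
    _ = g * (n * (g⁻¹ * f * g)) * g⁻¹ := by rw [mem_centralizer_iff.1 hn _ hconj]
    _ = g * n * g⁻¹ * f := by group

variable [Finite G]

-- Modulo its centre this group is a `q`-group: the `q'`-part of an element centralizes `F`.
lemma isNilpotent_inf_centralizer [hq : Fact q.Prime] (hEF : E ⊓ centralizer F ≤ F)
    (hcomm : ∀ x ∈ E, ∀ f ∈ F, (orderOf x).Coprime (orderOf f) → Commute x f) :
    Group.IsNilpotent
      (E ⊓ centralizer {f | f ∈ F ∧ (orderOf f).Coprime q} : Subgroup G) := by
  set N : Subgroup G := E ⊓ centralizer {f | f ∈ F ∧ (orderOf f).Coprime q} with hN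
  have hpgroup : IsPGroup q (N ⧸ center N) := by
    intro u
    obtain ⟨x, rfl⟩ := QuotientGroup.mk_surjective u
    obtain ⟨a, ha⟩ := exists_coprime_orderOf_pow hq.out (x : G)
    refine ⟨a, (QuotientGroup.eq_one_iff (x ^ q ^ a)).2 (mem_center_iff.2 fun n => ?_)⟩
    have hyN : (x : G) ^ q ^ a ∈ N := (x ^ q ^ a).2
    have centralizes : F ≤ centralizer {(x : G) ^ q ^ a} := by
      refine le_of_forall_orderOf_eq_prime_pow fun r hr w hw ⟨k, hk⟩ => ?_
      rw [mem_centralizer_singleton_iff]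
      obtain rfl | hrq := eq_or_ne r q
      · exact (hcomm _ hyN.1 w hw (hk ▸ ha.pow_right k)).eq.symm
      · exact mem_centralizer_iff.1 hyN.2 w
          ⟨hw, hk ▸ ((Nat.coprime_primes hr hq.out).2 hrq).pow_left k⟩
    have hyF : (x : G) ^ q ^ a ∈ F :=
      hEF ⟨hyN.1, mem_centralizer_iff.2 fun f hf =>
        (mem_centralizer_singleton_iff.1 (centralizes hf))⟩
    exact Subtype.ext (mem_centralizer_iff.1 n.2.2 _ ⟨hyF, ha⟩).symm
  exact Group.of_quotient_center_nilpotent hpgroup.isNilpotent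

lemma le_FStarIn_of_forall_commute [H.Normal] [E.Normal] (hEH : E ≤ H)
    (hcomm : ∀ x ∈ E, ∀ f ∈ FStarIn H, (orderOf x).Coprime (orderOf f) → Commute x f) :
    E ≤ FStarIn H := by
  have := FStarIn_normal (H := H)
  refine le_of_forall_orderOf_eq_prime_pow fun q hq z hz ⟨k, hk⟩ => ?_
  have := Fact.mk hq
  have := centralizer_setOf_coprime_normal (F := FStarIn H) (q := q)
  have nilpotent := isNilpotent_inf_centralizer (q := q)
    ((inf_le_inf_right _ hEH).trans inf_centralizer_FStarIn_le) hcomm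
  have hzN : z ∈ E ⊓ centralizer {f | f ∈ FStarIn H ∧ (orderOf f).Coprime q} :=
    ⟨hz, mem_centralizer_iff.2 fun f ⟨hf, hfq⟩ =>
      (hcomm z hz f hf (hk ▸ hfq.symm.pow_left k)).eq.symm⟩
  exact isQuasinilpotentGroup_of_isNilpotent.le_FStarIn (inf_le_left.trans hEH)
    le_normalizer_of_normal hzN

lemma commute_of_forall_mem_chiefCentralizer [F.Normal] [Group.IsNilpotent F] {x f : G}
    (hx : ∀ p : ℕ, p.Prime → ∀ P : Subgroup G, P.Normal → IsSylowIn p P F →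
      x ∈ chiefCentralizer P (frattiniIn P))
    (hf : f ∈ F) (hxf : (orderOf x).Coprime (orderOf f)) : Commute x f := by
  suffices zpowers f ≤ centralizer {x} from
    (mem_centralizer_singleton_iff.1 (this (mem_zpowers f))).symm
  refine le_of_forall_orderOf_eq_prime_pow fun r hr w hw ⟨k, hk⟩ => ?_
  have := Fact.mk hr
  obtain rfl | hk0 := eq_or_ne k 0
  · rw [pow_zero, orderOf_eq_one_iff] at hk
    exact hk ▸ one_mem _
  obtain ⟨P, hP, hPF, mem_P⟩ := exists_normal_isSylowIn (F := F) (p := r)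
  obtain ⟨n, hn⟩ := hPF.2.1.exists_card_eq
  have hrf : r ∣ orderOf f := (dvd_pow_self r hk0).trans (hk ▸ orderOf_dvd_of_mem_zpowers hw)
  have hcard : (Nat.card (zpowers x)).Coprime (Nat.card P) := by
    rw [Nat.card_zpowers, hn]
    exact (hxf.coprime_dvd_right hrf).pow_right n
  have hxP := le_centralizer_of_le_chiefCentralizer hcard (zpowers_le.2 (hx r hr P hP hPF))
  exact mem_centralizer_singleton_iff.2
    (mem_centralizer_iff.1 (hxP (mem_zpowers x)) w (mem_P w (zpowers_le.2 hf hw) ⟨k, hk⟩))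

lemma commutator_top_le_FStarIn [H.Normal] [Group.IsNilpotent (FStarIn H)]
    (hprime : ∀ p : ℕ, p.Prime → ∀ P : Subgroup G, P.Normal → IsSylowIn p P (FStarIn H) →
      HasPrimeFrattiniFactors P) : ⁅(⊤ : Subgroup G), H⁆ ≤ FStarIn H := by
  have := FStarIn_normal (H := H)
  refine le_FStarIn_of_forall_commute (commutator_le_right _ _) fun x hx f hf =>
    commute_of_forall_mem_chiefCentralizer (fun p hp P hP hPF => ?_) hf
  exact (hprime p hp P hP hPF).commutator_le (commutator_mono le_rfl le_top hx)

lemma isHypercyclicallyEmbedded_of_isNilpotent [F.Normal] [Group.IsNilpotent F]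
    (hprime : ∀ p : ℕ, p.Prime → ∀ P : Subgroup G, P.Normal → IsSylowIn p P F →
      HasPrimeFrattiniFactors P) : IsHypercyclicallyEmbedded F := by
  refine ⟨‹_›, fun A B h hAF => ?_⟩
  have ⟨_, _, hBA, _⟩ := h
  have exists_sylow : ∃ p : ℕ, p.Prime ∧ ∃ P : Subgroup G, P.Normal ∧ IsSylowIn p P F ∧
      ¬ A ⊓ P ≤ B := by
    by_contra! hcon
    refine hBA.not_ge (le_of_forall_orderOf_eq_prime_pow fun q hq z hz hzq => ?_)
    have := Fact.mk hq
    obtain ⟨P, hP, hPF, mem_P⟩ := exists_normal_isSylowIn (F := F) (p := q)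
    exact hcon q hq P hP hPF ⟨hz, mem_P z (hAF hz) hzq⟩
  obtain ⟨p, hp, P, hP, hPF, hAP⟩ := exists_sylow
  have := Fact.mk hp
  obtain ⟨hinf, hrel⟩ := h.inf hP hAP
  rw [← hrel, (hprime p hp P hP hPF).relIndex_eq_prime hPF.2.1 hinf inf_le_right]
  exact hp

lemma reflTransGen_isCyclicStep (hN : N.Normal) (hM : M.Normal) (hNM : N ≤ M)
    (hstep : ∀ A B : Subgroup G, IsChiefFactor A B → N ≤ B → A ≤ M → IsCyclicStep B A) :
    Relation.ReflTransGen IsCyclicStep N M := by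
  obtain ⟨B, ⟨hB, hNB, hBM, hreach⟩, hmax⟩ := (Set.toFinite {B : Subgroup G |
    B.Normal ∧ N ≤ B ∧ B ≤ M ∧ Relation.ReflTransGen IsCyclicStep N B}).exists_maximal
      ⟨N, hN, le_rfl, hNM, .refl⟩
  obtain rfl | hlt := hBM.eq_or_lt
  · exact hreach
  obtain ⟨A, hAM, hA⟩ := exists_isChiefFactor_right hM hB hlt
  have hBA := hA.2.2.1
  exact (hBA.not_ge (hmax ⟨hA.1, hNB.trans hBA.le, hAM,
    hreach.tail (hstep A B hA hNB hAM)⟩ hBA.le)).elim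

lemma IsHypercyclicallyEmbedded.reflTransGen_isCyclicStep (hN : IsHypercyclicallyEmbedded N) :
    Relation.ReflTransGen IsCyclicStep ⊥ N := by
  refine _root_.reflTransGen_isCyclicStep inferInstance hN.normal bot_le fun A B h _ hA => ?_
  have ⟨_, _, hBA, _⟩ := h
  have := Fact.mk (hN.prime_relIndex A B h hA)
  exact (isCyclicStep_iff hBA.le).2 (isCyclic_of_prime_card card_map_mk'_eq_relIndex)

lemma reflTransGen_isCyclicStep_of_commutator_top_le [F.Normal] [H.Normal] (hFH : F ≤ H)
    (h : ⁅(⊤ : Subgroup G), H⁆ ≤ F) : Relation.ReflTransGen IsCyclicStep F H := by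
  refine reflTransGen_isCyclicStep inferInstance inferInstance hFH fun A B hAB hFB hAH => ?_
  have ⟨_, _, hBA, _⟩ := hAB
  obtain ⟨x, hxA, hxB⟩ := SetLike.exists_of_lt hBA
  have hx : x ∈ factorCentralizer ⊤ B :=
    (le_factorCentralizer_iff le_normalizer_of_normal).2
      ((commutator_comm _ _).le.trans (h.trans hFB)) (hAH hxA)
  have : (zpowers x ⊔ B : Subgroup G).Normal :=
    normalizer_eq_top_iff.1 (top_le_iff.1 (le_normalizer_zpowers_sup hx))
  have hA : zpowers x ⊔ B = A :=
    (hAB.eq_or_eq this le_sup_right (sup_le (zpowers_le.2 hxA) hBA.le)).resolve_left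
      fun h => hxB (sup_eq_right.1 h (mem_zpowers x))
  have hmap : A.map (QuotientGroup.mk' B) = zpowers (QuotientGroup.mk' B x) := by
    rw [← hA, Subgroup.map_sup, MonoidHom.map_zpowers, QuotientGroup.map_mk'_self, sup_bot_eq]
  rw [isCyclicStep_iff hBA.le, hmap]
  infer_instance

theorem isSupersoluble_of_hasPrimeFrattiniFactors [H.Normal] (hGH : IsSupersoluble (G ⧸ H))
    [Group.IsNilpotent (FStarIn H)]
    (hprime : ∀ p : ℕ, p.Prime → ∀ P : Subgroup G, P.Normal → IsSylowIn p P (FStarIn H) →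
      HasPrimeFrattiniFactors P) : IsSupersoluble G := by
  have := FStarIn_normal (H := H)
  have below_FStarIn : Relation.ReflTransGen IsCyclicStep ⊥ (FStarIn H) :=
    (isHypercyclicallyEmbedded_of_isNilpotent hprime).reflTransGen_isCyclicStep
  have below_H : Relation.ReflTransGen IsCyclicStep (FStarIn H) H :=
    reflTransGen_isCyclicStep_of_commutator_top_le (FStarIn_le H) (commutator_top_le_FStarIn hprime)
  have above_H : Relation.ReflTransGen IsCyclicStep H ⊤ := by
    simpa only [Function.onFun, MonoidHom.comap_bot, QuotientGroup.ker_mk', comap_top] using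
      (isSupersoluble_iff.1 hGH).lift (p := IsCyclicStep)
        (fun A => A.comap (QuotientGroup.mk' H)) fun _ _ step => step.comap _
  exact isSupersoluble_iff.2 ((below_FStarIn.trans below_H).trans above_H)

end SupersolubleExtension

/-- If `H ⊴ G` with `G/H` supersoluble and every maximal subgroup of
every non-cyclic Sylow subgroup of `F*(H)` having no supersoluble supplement in `G`
is 𝔘ₛ-quasinormal in `G`, then `G` is supersoluble. -/
theorem stmt_3 {G : Type*} [Group G] [Finite G]
    (H : Subgroup G) (hH : H.Normal) (hGH : IsSupersoluble (G ⧸ H))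
    (hyp : ∀ p : ℕ, p.Prime → ∀ P : Subgroup G, IsSylowIn p P (FStarIn H) →
      ¬ IsCyclic P → ∀ M : Subgroup G, IsMaximalIn M P →
        ¬ HasSupersolubleSupplement M → UsQuasinormal M) :
    IsSupersoluble G := by
  have := isSolvable_FStarIn hyp
  have := isNilpotent_FStarIn (H := H)
  refine isSupersoluble_of_hasPrimeFrattiniFactors hGH fun p hp P hP hPF => ?_
  have := Fact.mk hp
  exact hasPrimeFrattiniFactors_of_hasUsQuasinormalMaximals hPF.2.1 (hyp p hp P hPF)
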